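/- arXiv:1909.03667 — 2 statements merged into one kernel-verified Lean document; each statement's English description precedes it below -/
import Mathlib

section
/- (Generalized logarithmic Hardy–Littlewood–Sobolev inequality.) For every α ≥ 0 and every admissible function f on ℝ² with mass M = ∫_{ℝ²} f dx > 0, one has ∫_{ℝ²} f log(f/M) dx + α ∫_{ℝ²} V f dx + M(1−α)(1+log π) ≥ (2/M)(α−1) ∬_{ℝ²×ℝ²} f(x) f(y) log|x−y| dx dy. -/
open MeasureTheory Real Filter

noncomputable section

/-- The Euclidean plane ℝ². -/
abbrev E2 := EuclideanSpace ℝ (Fin 2)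

/-- The probability density μ(x) = 1/(π (1+|x|²)²) on ℝ². -/
def mu2 (x : E2) : ℝ := 1 / (π * (1 + ‖x‖ ^ 2) ^ 2)

/-- The external potential V(x) = −log μ(x) = 2 log(1+|x|²) + log π. -/
def Vpot (x : E2) : ℝ := 2 * Real.log (1 + ‖x‖ ^ 2) + Real.log π

/-- A function f on ℝ² is admissible if it is measurable, nonnegative a.e., integrable,
and ∫ f |log f|, ∫ V f and ∬ f(x) f(y) |log|x−y|| are all finite. -/
def Admissible (f : E2 → ℝ) : Prop :=
  Measurable f ∧ (∀ᵐ x : E2, 0 ≤ f x) ∧ Integrable f ∧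
  Integrable (fun x => f x * |Real.log (f x)|) ∧
  Integrable (fun x => Vpot x * f x) ∧
  Integrable (fun p : E2 × E2 => f p.1 * f p.2 * |Real.log ‖p.1 - p.2‖|)

/-- The repulsive free energy F⁺_β. -/
def Fplus (β : ℝ) (f : E2 → ℝ) : ℝ :=
  (∫ x, f x * Real.log (f x)) + β * (∫ x, Vpot x * f x)
    - (1 / (4 * π)) * ∫ p : E2 × E2, f p.1 * f p.2 * Real.log ‖p.1 - p.2‖

/-- The attractive free energy F⁻_β. -/
def Fminus (β : ℝ) (f : E2 → ℝ) : ℝ :=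
  (∫ x, f x * Real.log (f x)) + β * (∫ x, Vpot x * f x)
    + (1 / (4 * π)) * ∫ p : E2 × E2, f p.1 * f p.2 * Real.log ‖p.1 - p.2‖

/-!
By homogeneity `M = 1`. In stereographic coordinates `μ` is the uniform probability measure `σ` of
the sphere and `log |x - y|` becomes the kernel `K = -log d`, with `d` the squared chordal distance
on the sphere of diameter one. With `H` the relative entropy of `f dx` with respect to `σ` and
`I = ∬ K f f`, the inequality reads `(H - (I - 1)) + α (I - 1) ≥ 0`, and both summands are
nonnegative.

*`I ≥ 1`.* Expand `-log d` in powers of `1 - d`. Since `(1 - d(x, y)) ^ k` is the squared overlap of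
two spin coherent states in dimension `k + 1`, its double integral is the purity of a mixed state
and hence at least `1 / (k + 1)`. The same moments give `∬ d K f f ≤ 1 / 4` when `f` is centred.

*`H ≥ I - 1`.* For `t < 1` the free energy `H - t I` is bounded below. It decreases under suitable
conformal maps unless `f` is centred on the sphere, so almost minimisers are almost centred. Their
second variation in the directions of the three coordinate functions `X` of the sphere gives, up to
small errors, `2 t ∬ ⟨X(x), X(y)⟩ K f f ≤ 1`, where `⟨X(x), X(y)⟩ = 1 - 2 d`. With the bound on
`∬ d K f f` this yields `t I ≤ (1 + t) / 2`, hence `H - t I ≥ -(1 + t) / 2` for almost minimisers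
and so for every `f`. Finally let `t → 1`.
-/

namespace LogHLS

open InformationTheory
open scoped ENNReal RealInnerProductSpace

section FreeEnergy

variable {X : Type*} [MeasurableSpace X] {σ ν : Measure X} {K : X → X → ℝ} {t : ℝ}

/-- The interaction energy `∬ K(x, y) dν(x) dν(y)` of a measure with itself. -/
def selfEnergy (K : X → X → ℝ) (ν : Measure X) : ℝ := ∫ p, K p.1 p.2 ∂(ν.prod ν)

/-- The free energy `KL(ν | σ) - t ∬ K dν dν` at coupling `t`, with reference measure `σ`. It is
meaningful on measures of finite free energy, see `FiniteFreeEnergy`. -/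
def freeEnergy (σ : Measure X) (K : X → X → ℝ) (t : ℝ) (ν : Measure X) : ℝ :=
  (klDiv ν σ).toReal - t * selfEnergy K ν

/-- The probability measures that compete in the minimisation of the free energy: those for which
both of its terms are finite. -/
structure FiniteFreeEnergy (σ : Measure X) (K : X → X → ℝ) (ν : Measure X) : Prop where
  isProbabilityMeasure : IsProbabilityMeasure ν
  klDiv_ne_top : klDiv ν σ ≠ ∞
  integrable_kernel : Integrable (fun p : X × X => K p.1 p.2) (ν.prod ν)

/-- The measures whose free energy is within `ε` of the infimum. Since the second variation only
needs an approximate minimum, the existence of a minimiser is never used. -/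
structure IsAlmostMinimizer (σ : Measure X) (K : X → X → ℝ) (t ε : ℝ) (ν : Measure X) : Prop
    extends FiniteFreeEnergy σ K ν where
  freeEnergy_le : ∀ ν', FiniteFreeEnergy σ K ν' → freeEnergy σ K t ν ≤ freeEnergy σ K t ν' + ε

lemma FiniteFreeEnergy.absolutelyContinuous (hν : FiniteFreeEnergy σ K ν) : ν ≪ σ :=
  (klDiv_ne_top_iff.1 hν.klDiv_ne_top).1

lemma FiniteFreeEnergy.integrable_llr (hν : FiniteFreeEnergy σ K ν) : Integrable (llr ν σ) ν :=
  (klDiv_ne_top_iff.1 hν.klDiv_ne_top).2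

lemma FiniteFreeEnergy.prod_absolutelyContinuous [SFinite σ] (hν : FiniteFreeEnergy σ K ν) :
    ν.prod ν ≪ σ.prod σ :=
  have := hν.isProbabilityMeasure
  hν.absolutelyContinuous.prod hν.absolutelyContinuous

lemma ae_fst_ne_snd [MeasurableEq X] (μ ν : Measure X) [SFinite ν]
    [NullSingletonClass ν] : ∀ᵐ p ∂(μ.prod ν), p.1 ≠ p.2 := by
  refine measure_eq_zero_iff_ae_notMem.1
    ((Measure.measure_prod_null measurableSet_diagonal).2 (ae_of_all _ fun x => ?_))
  have : Prod.mk x ⁻¹' Set.diagonal X = {x} := by ext; simp [eq_comm]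
  simp [this]

lemma FiniteFreeEnergy.ae_fst_ne_snd [MeasurableEq X] [SFinite σ] [NullSingletonClass σ]
    (hν : FiniteFreeEnergy σ K ν) : ∀ᵐ p ∂(ν.prod ν), p.1 ≠ p.2 :=
  hν.prod_absolutelyContinuous.ae_le (LogHLS.ae_fst_ne_snd _ _)

lemma toReal_klDiv_eq_integral_llr [IsProbabilityMeasure ν] [IsProbabilityMeasure σ] (h : ν ≪ σ) :
    (klDiv ν σ).toReal = ∫ x, llr ν σ x ∂ν :=
  toReal_klDiv_of_measure_eq h (by simp)

lemma toReal_klDiv_tilted_right [IsProbabilityMeasure ν] [IsProbabilityMeasure σ]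
    (h : klDiv ν σ ≠ ∞) {b : X → ℝ} (hb : Integrable b ν)
    (hexp : Integrable (fun x => exp (b x)) σ) :
    (klDiv ν (σ.tilted b)).toReal
      = (klDiv ν σ).toReal - ∫ x, b x ∂ν + log (∫ x, exp (b x) ∂σ) := by
  obtain ⟨hac, hllr⟩ := klDiv_ne_top_iff.1 h
  have := isProbabilityMeasure_tilted hexp
  rw [toReal_klDiv_eq_integral_llr (hac.trans (absolutelyContinuous_tilted hexp)),
    toReal_klDiv_eq_integral_llr hac, integral_llr_tilted_right hac hb hexp hllr]

/-- The Donsker–Varadhan inequality. -/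
lemma integral_le_toReal_klDiv_add_log [IsProbabilityMeasure ν] [IsProbabilityMeasure σ]
    (h : klDiv ν σ ≠ ∞) {b : X → ℝ} (hb : Integrable b ν)
    (hexp : Integrable (fun x => exp (b x)) σ) :
    ∫ x, b x ∂ν ≤ (klDiv ν σ).toReal + log (∫ x, exp (b x) ∂σ) := by
  have := toReal_klDiv_tilted_right h hb hexp
  have : 0 ≤ (klDiv ν (σ.tilted b)).toReal := ENNReal.toReal_nonneg
  linarith

lemma mul_selfEnergy_le_toReal_klDiv_add_log [IsProbabilityMeasure σ]
    (hν : FiniteFreeEnergy σ K ν) {C : ℝ}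
    (hexp : ∀ y, Integrable (fun x => exp (t * K x y)) σ)
    (hC : ∀ y, ∫ x, exp (t * K x y) ∂σ ≤ C) :
    t * selfEnergy K ν ≤ (klDiv ν σ).toReal + log C := by
  have := hν.isProbabilityMeasure
  have hK := hν.integrable_kernel.const_mul t
  calc t * selfEnergy K ν = ∫ y, ∫ x, t * K x y ∂ν ∂ν := by
        rw [selfEnergy, ← integral_const_mul, integral_prod_symm _ hK]
    _ ≤ ∫ _, ((klDiv ν σ).toReal + log C) ∂ν := by
        refine integral_mono_ae hK.integral_prod_right (integrable_const _) ?_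
        filter_upwards [hK.prod_left_ae] with y hy
        exact (integral_le_toReal_klDiv_add_log hν.klDiv_ne_top hy (hexp y)).trans
          (by gcongr; exacts [integral_exp_pos (hexp y), hC y])
    _ = _ := by simp

lemma exists_isAlmostMinimizer (hne : ∃ ν, FiniteFreeEnergy σ K ν)
    {m : ℝ} (hm : ∀ ν, FiniteFreeEnergy σ K ν → m ≤ freeEnergy σ K t ν) {ε : ℝ} (hε : 0 < ε) :
    ∃ ν, IsAlmostMinimizer σ K t ε ν := by
  have hbdd : BddBelow (freeEnergy σ K t '' {ν | FiniteFreeEnergy σ K ν}) :=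
    ⟨m, by rintro _ ⟨ν, hν, rfl⟩; exact hm ν hν⟩
  obtain ⟨_, ⟨ν, hν, rfl⟩, hlt⟩ := Real.lt_sInf_add_pos (Set.Nonempty.image _ hne) hε
  refine ⟨ν, hν, fun ν' hν' => hlt.le.trans ?_⟩
  gcongr
  exact csInf_le hbdd ⟨ν', hν', rfl⟩

end FreeEnergy

section WithDensity

variable {X : Type*} [MeasurableSpace X] {ν : Measure X} {ρ : X → ℝ}

lemma integral_withDensity_ofReal (hρ : Measurable ρ) (hρ0 : ∀ᵐ x ∂ν, 0 ≤ ρ x) (h : X → ℝ) :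
    ∫ x, h x ∂(ν.withDensity fun x => ENNReal.ofReal (ρ x)) = ∫ x, ρ x * h x ∂ν := by
  rw [integral_withDensity_eq_integral_toReal_smul hρ.ennreal_ofReal (by simp)]
  refine integral_congr_ae ?_
  filter_upwards [hρ0] with x hx
  simp [ENNReal.toReal_ofReal hx]

lemma integrable_withDensity_ofReal_iff (hρ : Measurable ρ) (hρ0 : ∀ᵐ x ∂ν, 0 ≤ ρ x)
    {h : X → ℝ} :
    Integrable h (ν.withDensity fun x => ENNReal.ofReal (ρ x))
      ↔ Integrable (fun x => ρ x * h x) ν := by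
  rw [integrable_withDensity_iff_integrable_smul' hρ.ennreal_ofReal (by simp)]
  refine integrable_congr ?_
  filter_upwards [hρ0] with x hx
  simp [ENNReal.toReal_ofReal hx]

lemma isProbabilityMeasure_withDensity_ofReal (hρ : Integrable ρ ν) (hρ0 : ∀ᵐ x ∂ν, 0 ≤ ρ x)
    (hρ1 : ∫ x, ρ x ∂ν = 1) :
    IsProbabilityMeasure (ν.withDensity fun x => ENNReal.ofReal (ρ x)) := by
  constructor
  rw [withDensity_apply _ MeasurableSet.univ, setLIntegral_univ,
    ← ofReal_integral_eq_lintegral_ofReal hρ hρ0, hρ1, ENNReal.ofReal_one]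

lemma prod_withDensity_ofReal [SFinite ν] (hρ : Measurable ρ) (hρ0 : ∀ᵐ x ∂ν, 0 ≤ ρ x) :
    (ν.withDensity fun x => ENNReal.ofReal (ρ x)).prod (ν.withDensity fun x => ENNReal.ofReal (ρ x))
      = (ν.prod ν).withDensity fun p => ENNReal.ofReal (ρ p.1 * ρ p.2) := by
  rw [prod_withDensity hρ.ennreal_ofReal hρ.ennreal_ofReal]
  refine withDensity_congr_ae ?_
  filter_upwards [Measure.quasiMeasurePreserving_fst.ae hρ0] with p hp
  rw [ENNReal.ofReal_mul hp]

lemma llr_withDensity_ofReal_left {σ : Measure X} [SigmaFinite ν] [SigmaFinite σ] (h : ν ≪ σ)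
    (hρ : Measurable ρ) (hρ0 : ∀ᵐ x ∂ν, 0 < ρ x) :
    llr (ν.withDensity fun x => ENNReal.ofReal (ρ x)) σ =ᵐ[ν]
      fun x => log (ρ x) + llr ν σ x := by
  filter_upwards [h.ae_le (Measure.rnDeriv_withDensity_left (μ := ν) (ν := σ)
      hρ.ennreal_ofReal.aemeasurable (by simp)), Measure.rnDeriv_pos h,
      h.ae_le (Measure.rnDeriv_ne_top ν σ), hρ0] with x hx hpos htop hρx
  simp only [llr]
  rw [hx, ENNReal.toReal_mul, ENNReal.toReal_ofReal hρx.le,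
    log_mul hρx.ne' (ENNReal.toReal_pos hpos.ne' htop).ne']

lemma mul_llr_withDensity_ofReal [SigmaFinite ν] {s : X → ℝ} (hρ : Measurable ρ)
    (hρ0 : ∀ᵐ x ∂ν, 0 ≤ ρ x) (hs : Measurable s) (hs0 : ∀ x, 0 < s x)
    [SigmaFinite (ν.withDensity fun x => ENNReal.ofReal (ρ x))] :
    (fun x => ρ x * llr (ν.withDensity fun x => ENNReal.ofReal (ρ x))
        (ν.withDensity fun x => ENNReal.ofReal (s x)) x)
      =ᵐ[ν] fun x => ρ x * log (ρ x) - log (s x) * ρ x := by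
  have hright := Measure.rnDeriv_withDensity_right (ν.withDensity fun x => ENNReal.ofReal (ρ x)) ν
    hs.ennreal_ofReal.aemeasurable (ae_of_all _ fun x => (ENNReal.ofReal_pos.2 (hs0 x)).ne')
    (ae_of_all _ fun _ => ENNReal.ofReal_ne_top)
  filter_upwards [hright, Measure.rnDeriv_withDensity ν hρ.ennreal_ofReal, hρ0] with x hx hx' hρx
  rcases hρx.eq_or_lt with h | h
  · simp [← h]
  · rw [llr, hx, hx', ENNReal.toReal_mul, ENNReal.toReal_inv, ENNReal.toReal_ofReal (hs0 x).le,
      ENNReal.toReal_ofReal hρx, log_mul (inv_pos.2 (hs0 x)).ne' h.ne', log_inv]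
    ring

lemma integrable_mul_abs_iff {u v : X → ℝ} (hu : Measurable u)
    (hv : Measurable v) (hu0 : ∀ᵐ x ∂ν, 0 ≤ u x) :
    Integrable (fun x => u x * |v x|) ν ↔ Integrable (fun x => u x * v x) ν := by
  refine Iff.trans ?_ (integrable_norm_iff (hu.mul hv).aestronglyMeasurable)
  refine integrable_congr ?_
  filter_upwards [hu0] with x hx
  rw [norm_mul, norm_of_nonneg hx, norm_eq_abs]

lemma ae_prod_nonneg (hρ0 : ∀ᵐ x ∂ν, 0 ≤ ρ x) :
    ∀ᵐ p ∂(ν.prod ν), 0 ≤ ρ p.1 * ρ p.2 := by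
  filter_upwards [Measure.quasiMeasurePreserving_fst.ae hρ0,
    Measure.quasiMeasurePreserving_snd.ae hρ0] with p h₁ h₂ using mul_nonneg h₁ h₂

variable {K : X → X → ℝ}

lemma selfEnergy_withDensity_ofReal [SFinite ν] (hρ : Measurable ρ) (hρ0 : ∀ᵐ x ∂ν, 0 ≤ ρ x) :
    selfEnergy K (ν.withDensity fun x => ENNReal.ofReal (ρ x))
      = ∫ p, ρ p.1 * ρ p.2 * K p.1 p.2 ∂(ν.prod ν) := by
  rw [selfEnergy, prod_withDensity_ofReal hρ hρ0,
    integral_withDensity_ofReal (by fun_prop) (ae_prod_nonneg hρ0)]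

lemma integrable_prod_withDensity_ofReal_iff [SFinite ν] (hρ : Measurable ρ)
    (hρ0 : ∀ᵐ x ∂ν, 0 ≤ ρ x) {h : X × X → ℝ} :
    Integrable h ((ν.withDensity fun x => ENNReal.ofReal (ρ x)).prod
        (ν.withDensity fun x => ENNReal.ofReal (ρ x)))
      ↔ Integrable (fun p => ρ p.1 * ρ p.2 * h p) (ν.prod ν) := by
  rw [prod_withDensity_ofReal hρ hρ0,
    integrable_withDensity_ofReal_iff (by fun_prop) (ae_prod_nonneg hρ0)]

end WithDensity

/-! ### Second variation of the free energy -/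

lemma one_add_mul_log_add_one_sub_mul_log_le {u : ℝ} (hu : |u| ≤ 1 / 2) :
    (1 + u) * log (1 + u) + (1 - u) * log (1 - u) ≤ u ^ 2 + 5 * u ^ 4 := by
  have taylor : ∀ v : ℝ, |v| ≤ 1 / 2 → log (1 - v) ≤ -(v + v ^ 2 / 2 + v ^ 3 / 3) + 2 * v ^ 4 := by
    intro v hv
    have h := abs_log_sub_add_sum_range_le (hv.trans_lt one_half_lt_one) 3
    have hbound : |v| ^ (3 + 1) / (1 - |v|) ≤ 2 * v ^ 4 := by
      rw [Even.pow_abs ⟨2, rfl⟩, div_le_iff₀ (by linarith)]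
      linear_combination 2 * v ^ 4 * hv
    have := (le_abs_self _).trans (h.trans hbound)
    norm_num [Finset.sum_range_succ] at this
    linarith
  obtain ⟨h₁, h₂⟩ := abs_le.1 hu
  have hpos := taylor u hu
  have hneg := taylor (-u) (by rwa [abs_neg])
  rw [sub_neg_eq_add] at hneg
  have := mul_le_mul_of_nonneg_left hpos (by linarith : 0 ≤ 1 - u)
  have := mul_le_mul_of_nonneg_left hneg (by linarith : 0 ≤ 1 + u)
  nlinarith [sq_nonneg (u ^ 2)]

section Perturbation

variable {X : Type*} [MeasurableSpace X] {σ ν : Measure X} {K : X → X → ℝ} {t ε : ℝ} {w : X → ℝ}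

/-- The perturbation `(1 + w) ν` of a measure by a function small enough that `1 + w` is a
density. -/
def perturb (ν : Measure X) (w : X → ℝ) : Measure X :=
  ν.withDensity fun x => ENNReal.ofReal (1 + w x)

/-- The functions `w` for which `(1 + w) ν` and `(1 - w) ν` are again probability measures; the
bound `1 / 2` keeps both densities away from zero. -/
structure IsPerturbation (ν : Measure X) (w : X → ℝ) : Prop where
  measurable : Measurable w
  abs_le_half : ∀ x, |w x| ≤ 1 / 2
  integral_eq_zero : ∫ x, w x ∂ν = 0

lemma IsPerturbation.neg (hw : IsPerturbation ν w) : IsPerturbation ν (-w) where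
  measurable := hw.measurable.neg
  abs_le_half := by simpa using hw.abs_le_half
  integral_eq_zero := by simp [integral_neg, hw.integral_eq_zero]

lemma IsPerturbation.one_add_pos (hw : IsPerturbation ν w) (x : X) : 0 < 1 + w x := by
  linarith [neg_le_of_abs_le (hw.abs_le_half x)]

lemma IsPerturbation.measurable_one_add (hw : IsPerturbation ν w) :
    Measurable fun x => 1 + w x := hw.measurable.const_add 1

lemma IsPerturbation.abs_one_add_le (hw : IsPerturbation ν w) (x : X) : ‖1 + w x‖ ≤ 3 / 2 := by
  rw [norm_of_nonneg (hw.one_add_pos x).le]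
  linarith [le_of_abs_le (hw.abs_le_half x)]

lemma IsPerturbation.ae_one_add_nonneg (hw : IsPerturbation ν w) : ∀ᵐ x ∂ν, 0 ≤ 1 + w x :=
  ae_of_all _ fun x => (hw.one_add_pos x).le

lemma integrable_of_abs_le [IsFiniteMeasure ν] (hw : Measurable w) {B : ℝ}
    (hB : ∀ x, |w x| ≤ B) : Integrable w ν :=
  .of_bound hw.aestronglyMeasurable B (ae_of_all _ hB)

lemma abs_one_add_mul_log_le {u : ℝ} (hu : |u| ≤ 1 / 2) : |(1 + u) * log (1 + u)| ≤ 1 := by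
  obtain ⟨h₁, h₂⟩ := abs_le.1 hu
  have hpos : 0 < 1 + u := by linarith
  have hlow := one_sub_inv_le_log_of_pos hpos
  have hup := log_le_sub_one_of_pos hpos
  have : (1 + u) * (1 + u)⁻¹ = 1 := mul_inv_cancel₀ hpos.ne'
  rw [abs_le]
  constructor <;> nlinarith

lemma IsPerturbation.isProbabilityMeasure [IsProbabilityMeasure ν] (hw : IsPerturbation ν w) :
    IsProbabilityMeasure (perturb ν w) := by
  have hint : Integrable w ν := integrable_of_abs_le hw.measurable hw.abs_le_half
  refine isProbabilityMeasure_withDensity_ofReal ((integrable_const 1).add hint)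
    hw.ae_one_add_nonneg ?_
  rw [integral_add (integrable_const _) hint, hw.integral_eq_zero]
  simp

lemma llr_perturb [SigmaFinite ν] [SigmaFinite σ] (h : ν ≪ σ) (hw : IsPerturbation ν w) :
    llr (perturb ν w) σ =ᵐ[perturb ν w] fun x => log (1 + w x) + llr ν σ x :=
  (withDensity_absolutelyContinuous _ _).ae_le
    (llr_withDensity_ofReal_left h hw.measurable_one_add (ae_of_all _ hw.one_add_pos))

lemma FiniteFreeEnergy.integrable_llr_perturb (hν : FiniteFreeEnergy σ K ν)
    (hw : IsPerturbation ν w) :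
    Integrable (fun x => (1 + w x) * log (1 + w x)) ν ∧
      Integrable (fun x => (1 + w x) * llr ν σ x) ν := by
  have := hν.isProbabilityMeasure
  have hmeas := hw.measurable_one_add
  exact ⟨integrable_of_abs_le (by fun_prop) fun x => abs_one_add_mul_log_le (hw.abs_le_half x),
    hν.integrable_llr.bdd_mul hmeas.aestronglyMeasurable (ae_of_all _ hw.abs_one_add_le)⟩

lemma FiniteFreeEnergy.integrable_mul_mul_kernel (hν : FiniteFreeEnergy σ K ν) {u v : X → ℝ}
    (hu : Measurable u) (hv : Measurable v) {B C : ℝ} (hB : ∀ x, ‖u x‖ ≤ B) (hC : ∀ x, ‖v x‖ ≤ C) :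
    Integrable (fun p : X × X => u p.1 * v p.2 * K p.1 p.2) (ν.prod ν) := by
  refine hν.integrable_kernel.bdd_mul (c := B * C) (Measurable.aestronglyMeasurable (by fun_prop))
    (ae_of_all _ fun p => ?_)
  rw [norm_mul]
  exact mul_le_mul (hB _) (hC _) (norm_nonneg _) ((norm_nonneg _).trans (hB p.1))

lemma finiteFreeEnergy_perturb [SigmaFinite σ] (hν : FiniteFreeEnergy σ K ν)
    (hw : IsPerturbation ν w) : FiniteFreeEnergy σ K (perturb ν w) := by
  have := hν.isProbabilityMeasure
  have hmeas := hw.measurable_one_add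
  obtain ⟨hlog, hllr⟩ := hν.integrable_llr_perturb hw
  refine ⟨hw.isProbabilityMeasure, klDiv_ne_top
    ((withDensity_absolutelyContinuous _ _).trans hν.absolutelyContinuous) ?_, ?_⟩
  · rw [integrable_congr (llr_perturb hν.absolutelyContinuous hw), perturb,
      integrable_withDensity_ofReal_iff hmeas hw.ae_one_add_nonneg]
    simp only [mul_add]
    exact hlog.add hllr
  · rw [perturb, integrable_prod_withDensity_ofReal_iff hmeas hw.ae_one_add_nonneg]
    exact hν.integrable_mul_mul_kernel hmeas hmeas hw.abs_one_add_le hw.abs_one_add_le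

lemma toReal_klDiv_perturb [IsProbabilityMeasure σ] (hν : FiniteFreeEnergy σ K ν)
    (hw : IsPerturbation ν w) :
    (klDiv (perturb ν w) σ).toReal
      = ∫ x, (1 + w x) * log (1 + w x) ∂ν + ∫ x, (1 + w x) * llr ν σ x ∂ν := by
  have := hν.isProbabilityMeasure
  have := hw.isProbabilityMeasure
  obtain ⟨hlog, hllr⟩ := hν.integrable_llr_perturb hw
  rw [toReal_klDiv_eq_integral_llr (finiteFreeEnergy_perturb hν hw).absolutelyContinuous,
    integral_congr_ae (llr_perturb hν.absolutelyContinuous hw), perturb,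
    integral_withDensity_ofReal hw.measurable_one_add hw.ae_one_add_nonneg,
    ← integral_add hlog hllr]
  simp only [mul_add]

lemma toReal_klDiv_perturb_add_le [IsProbabilityMeasure σ] (hν : FiniteFreeEnergy σ K ν)
    (hw : IsPerturbation ν w) :
    (klDiv (perturb ν w) σ).toReal + (klDiv (perturb ν (-w)) σ).toReal
      ≤ 2 * (klDiv ν σ).toReal + ∫ x, (w x ^ 2 + 5 * w x ^ 4) ∂ν := by
  have := hν.isProbabilityMeasure
  have hmeas := hw.measurable
  obtain ⟨hlog, hllr⟩ := hν.integrable_llr_perturb hw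
  obtain ⟨hlog_neg, hllr_neg⟩ := hν.integrable_llr_perturb hw.neg
  have hllr_add : ∫ x, (1 + w x) * llr ν σ x ∂ν + ∫ x, (1 + (-w) x) * llr ν σ x ∂ν
      = 2 * (klDiv ν σ).toReal := by
    rw [← integral_add hllr hllr_neg, toReal_klDiv_eq_integral_llr hν.absolutelyContinuous,
      ← integral_const_mul]
    congr 1 with x
    simp only [Pi.neg_apply]; ring
  have hlog_add : ∫ x, (1 + w x) * log (1 + w x) ∂ν + ∫ x, (1 + (-w) x) * log (1 + (-w) x) ∂ν
      ≤ ∫ x, (w x ^ 2 + 5 * w x ^ 4) ∂ν := by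
    rw [← integral_add hlog hlog_neg]
    have hbdd : ∀ x, |w x ^ 2 + 5 * w x ^ 4| ≤ (1 / 2) ^ 2 + 5 * (1 / 2) ^ 4 := fun x => by
      rw [abs_of_nonneg (by positivity), ← sq_abs (w x), ← Even.pow_abs ⟨2, rfl⟩ (w x)]
      gcongr <;> exact hw.abs_le_half x
    refine integral_mono (hlog.add hlog_neg) (integrable_of_abs_le (by fun_prop) hbdd) fun x => ?_
    simpa [← sub_eq_add_neg] using one_add_mul_log_add_one_sub_mul_log_le (hw.abs_le_half x)
  rw [toReal_klDiv_perturb hν hw, toReal_klDiv_perturb hν hw.neg]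
  linarith

lemma selfEnergy_perturb [SFinite ν] (hw : IsPerturbation ν w) :
    selfEnergy K (perturb ν w) = ∫ p, (1 + w p.1) * (1 + w p.2) * K p.1 p.2 ∂(ν.prod ν) :=
  selfEnergy_withDensity_ofReal hw.measurable_one_add hw.ae_one_add_nonneg

lemma selfEnergy_perturb_add (hν : FiniteFreeEnergy σ K ν) (hw : IsPerturbation ν w) :
    selfEnergy K (perturb ν w) + selfEnergy K (perturb ν (-w))
      = 2 * selfEnergy K ν + 2 * ∫ p, w p.1 * w p.2 * K p.1 p.2 ∂(ν.prod ν) := by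
  have := hν.isProbabilityMeasure
  have integrable_one_add {v : X → ℝ} (hv : IsPerturbation ν v) :=
    hν.integrable_mul_mul_kernel hv.measurable_one_add hv.measurable_one_add
      hv.abs_one_add_le hv.abs_one_add_le
  rw [selfEnergy_perturb hw, selfEnergy_perturb hw.neg, selfEnergy,
    ← integral_add (integrable_one_add hw) (integrable_one_add hw.neg), ← integral_const_mul,
    ← integral_const_mul, ← integral_add (hν.integrable_kernel.const_mul 2)
      ((hν.integrable_mul_mul_kernel hw.measurable hw.measurable hw.abs_le_half
        hw.abs_le_half).const_mul 2)]
  congr 1 with p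
  simp only [Pi.neg_apply]; ring

lemma IsAlmostMinimizer.two_mul_integral_kernel_le [IsProbabilityMeasure σ]
    (hν : IsAlmostMinimizer σ K t ε ν) (hw : IsPerturbation ν w) :
    2 * t * ∫ p, w p.1 * w p.2 * K p.1 p.2 ∂(ν.prod ν)
      ≤ ∫ x, (w x ^ 2 + 5 * w x ^ 4) ∂ν + 2 * ε := by
  have hplus := hν.freeEnergy_le _ (finiteFreeEnergy_perturb hν.toFiniteFreeEnergy hw)
  have hminus := hν.freeEnergy_le _ (finiteFreeEnergy_perturb hν.toFiniteFreeEnergy hw.neg)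
  have hentropy := toReal_klDiv_perturb_add_le hν.toFiniteFreeEnergy hw
  have henergy := congr_arg (t * ·) (selfEnergy_perturb_add hν.toFiniteFreeEnergy hw)
  simp only [freeEnergy] at hplus hminus henergy
  linarith

end Perturbation

/-! ### Conformal covariance of the free energy -/

section Conformal

variable {X : Type*} [MeasurableSpace X] {σ ν : Measure X} {K : X → X → ℝ} {t : ℝ}
  {T : X ≃ᵐ X} {g : X → ℝ}

/-- `T` acts conformally on the reference measure and the kernel: `g` is the logarithm of its
Jacobian relative to `σ`, and the kernel is invariant up to half the sum of its values at the two
points, as `-log` of a distance is under the conformal maps of a surface. -/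
structure IsConformal (σ : Measure X) (K : X → X → ℝ) (T : X ≃ᵐ X) (g : X → ℝ) : Prop where
  measurable : Measurable g
  exists_abs_le : ∃ B, ∀ x, |g x| ≤ B
  map_symm : σ.map T.symm = σ.withDensity fun x => ENNReal.ofReal (exp (g x))
  kernel_apply : ∀ᵐ p ∂(σ.prod σ), K (T p.1) (T p.2) = K p.1 p.2 - (g p.1 + g p.2) / 2

lemma IsConformal.integrable [IsFiniteMeasure ν] (hT : IsConformal σ K T g) : Integrable g ν :=
  hT.exists_abs_le.elim fun _ hB => integrable_of_abs_le hT.measurable hB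

lemma IsConformal.integrable_add_half [IsProbabilityMeasure ν] (hT : IsConformal σ K T g) :
    Integrable (fun p : X × X => (g p.1 + g p.2) / 2) (ν.prod ν) :=
  ((hT.integrable.comp_fst ν).add (hT.integrable.comp_snd ν)).div_const 2

lemma IsConformal.integral_add_half [IsProbabilityMeasure ν] (hT : IsConformal σ K T g) :
    ∫ p, (g p.1 + g p.2) / 2 ∂(ν.prod ν) = ∫ x, g x ∂ν := by
  rw [integral_div, integral_add (hT.integrable.comp_fst ν) (hT.integrable.comp_snd ν),
    integral_fun_fst, integral_fun_snd]
  simp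

lemma klDiv_map_measurableEquiv {Y : Type*} [MeasurableSpace Y] (μ ν : Measure X)
    [IsFiniteMeasure μ] [IsFiniteMeasure ν] (e : X ≃ᵐ Y) :
    klDiv (μ.map e) (ν.map e) = klDiv μ ν := by
  refine le_antisymm (klDiv_map_le μ ν e.measurable) ?_
  simpa [Measure.map_map e.symm.measurable e.measurable] using
    klDiv_map_le (μ.map e) (ν.map e) e.symm.measurable

variable [IsProbabilityMeasure σ]

lemma IsConformal.integrable_exp (hT : IsConformal σ K T g) :
    Integrable (fun x => exp (g x)) σ := by
  obtain ⟨B, hB⟩ := hT.exists_abs_le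
  refine integrable_of_abs_le hT.measurable.exp (B := exp B) fun x => ?_
  rw [abs_exp]
  exact exp_le_exp.2 (le_of_abs_le (hB x))

lemma IsConformal.integral_exp (hT : IsConformal σ K T g) : ∫ x, exp (g x) ∂σ = 1 := by
  have hmass := congr_arg (· Set.univ) hT.map_symm
  rw [Measure.map_apply T.symm.measurable MeasurableSet.univ, Set.preimage_univ, measure_univ,
    withDensity_apply _ MeasurableSet.univ, setLIntegral_univ] at hmass
  rw [integral_eq_lintegral_of_nonneg_ae (ae_of_all _ fun x => (exp_pos _).le)
    hT.measurable.exp.aestronglyMeasurable, ← hmass, ENNReal.toReal_one]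

lemma IsConformal.map_symm_eq_tilted (hT : IsConformal σ K T g) :
    σ.map T.symm = σ.tilted g := by
  rw [hT.map_symm, Measure.tilted, hT.integral_exp]
  simp only [div_one]

lemma IsConformal.klDiv_map [IsFiniteMeasure ν] (hT : IsConformal σ K T g) :
    klDiv (ν.map T) σ = klDiv ν (σ.tilted g) := by
  rw [← hT.map_symm_eq_tilted]
  have := klDiv_map_measurableEquiv ν (σ.map T.symm) T
  rwa [Measure.map_map T.measurable T.symm.measurable, T.self_comp_symm, Measure.map_id] at this

lemma IsConformal.kernel_comp_ae_eq (hT : IsConformal σ K T g) (hν : FiniteFreeEnergy σ K ν) :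
    (fun p : X × X => K (T p.1) (T p.2)) =ᵐ[ν.prod ν]
      fun p => K p.1 p.2 - (g p.1 + g p.2) / 2 :=
  hν.prod_absolutelyContinuous.ae_le hT.kernel_apply

lemma map_prod_map_self [SFinite ν] :
    (ν.map T).prod (ν.map T) = (ν.prod ν).map (T.prodCongr T) :=
  Measure.map_prod_map _ _ T.measurable T.measurable

lemma IsConformal.finiteFreeEnergy_map (hT : IsConformal σ K T g)
    (hν : FiniteFreeEnergy σ K ν) : FiniteFreeEnergy σ K (ν.map T) := by
  have := hν.isProbabilityMeasure
  refine ⟨Measure.isProbabilityMeasure_map T.measurable.aemeasurable, ?_, ?_⟩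
  · rw [hT.klDiv_map]
    exact klDiv_ne_top (hν.absolutelyContinuous.trans (absolutelyContinuous_tilted
      hT.integrable_exp)) (integrable_llr_tilted_right hν.absolutelyContinuous hT.integrable
        hν.integrable_llr hT.integrable_exp)
  · rw [map_prod_map_self, integrable_map_equiv]
    exact (hν.integrable_kernel.sub hT.integrable_add_half).congr (hT.kernel_comp_ae_eq hν).symm

lemma IsConformal.selfEnergy_map (hT : IsConformal σ K T g) (hν : FiniteFreeEnergy σ K ν) :
    selfEnergy K (ν.map T) = selfEnergy K ν - ∫ x, g x ∂ν := by
  have := hν.isProbabilityMeasure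
  rw [selfEnergy, map_prod_map_self, integral_map_equiv]
  refine (integral_congr_ae (hT.kernel_comp_ae_eq hν)).trans ?_
  rw [integral_sub hν.integrable_kernel hT.integrable_add_half, hT.integral_add_half, selfEnergy]

/-- A conformal map lowers the entropy and the energy by the same amount; only at coupling `1` is
the free energy invariant. -/
lemma IsConformal.freeEnergy_map (hT : IsConformal σ K T g) (hν : FiniteFreeEnergy σ K ν) :
    freeEnergy σ K t (ν.map T) = freeEnergy σ K t ν - (1 - t) * ∫ x, g x ∂ν := by
  have := hν.isProbabilityMeasure
  rw [freeEnergy, freeEnergy, hT.selfEnergy_map hν, hT.klDiv_map,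
    toReal_klDiv_tilted_right hν.klDiv_ne_top hT.integrable hT.integrable_exp, hT.integral_exp,
    log_one]
  ring

lemma IsAlmostMinimizer.integral_le_of_isConformal {δ : ℝ}
    (hν : IsAlmostMinimizer σ K t ((1 - t) * δ) ν) (hT : IsConformal σ K T g) (ht : t < 1) :
    ∫ x, g x ∂ν ≤ δ := by
  have h := hν.freeEnergy_le _ (hT.finiteFreeEnergy_map hν.toFiniteFreeEnergy)
  rw [hT.freeEnergy_map hν.toFiniteFreeEnergy] at h
  have h' : (1 - t) * ∫ x, g x ∂ν ≤ (1 - t) * δ := by linarith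
  exact le_of_mul_le_mul_left h' (sub_pos.2 ht)

end Conformal

section Directions

variable {X : Type*} [MeasurableSpace X] {σ ν : Measure X} {K : X → X → ℝ} {t ε τ : ℝ}
  {H : Type*} [NormedAddCommGroup H] {Φ : X → H}

lemma integrable_of_norm_le_one [IsFiniteMeasure ν] (hΦ : StronglyMeasurable Φ)
    (hΦ_le : ∀ x, ‖Φ x‖ ≤ 1) : Integrable Φ ν :=
  .of_bound hΦ.aestronglyMeasurable 1 (ae_of_all _ hΦ_le)

lemma norm_integral_le_one [NormedSpace ℝ H] [IsProbabilityMeasure ν] (hΦ_le : ∀ x, ‖Φ x‖ ≤ 1) :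
    ‖∫ x, Φ x ∂ν‖ ≤ 1 := by
  simpa using norm_integral_le_of_norm_le_const (μ := ν) (ae_of_all _ hΦ_le)

lemma norm_sub_integral_le_two [NormedSpace ℝ H] [IsProbabilityMeasure ν] (hΦ_le : ∀ x, ‖Φ x‖ ≤ 1)
    (x : X) :
    ‖Φ x - ∫ y, Φ y ∂ν‖ ≤ 2 := by
  linarith [norm_sub_le (Φ x) (∫ y, Φ y ∂ν), hΦ_le x, norm_integral_le_one (ν := ν) hΦ_le]

variable [InnerProductSpace ℝ H]

lemma abs_inner_sub_integral_le_two [IsProbabilityMeasure ν] (hΦ_le : ∀ x, ‖Φ x‖ ≤ 1) {v : H}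
    (hv : ‖v‖ = 1) (x : X) : |⟪v, Φ x - ∫ y, Φ y ∂ν⟫| ≤ 2 :=
  (abs_real_inner_le_norm _ _).trans
    (by rw [hv, one_mul]; exact norm_sub_integral_le_two hΦ_le x)

variable [CompleteSpace H]

lemma integral_inner_sub_integral [IsProbabilityMeasure ν] (hΦ : Integrable Φ ν) (v : H) :
    ∫ x, ⟪v, Φ x - ∫ y, Φ y ∂ν⟫ ∂ν = 0 := by
  refine (integral_inner (hΦ.sub (integrable_const _)) v).trans ?_
  simp only [Pi.sub_apply]
  rw [integral_sub hΦ (integrable_const _)]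
  simp

lemma integral_norm_sub_integral_sq_le_one [IsProbabilityMeasure ν] (hΦ : StronglyMeasurable Φ)
    (hΦ_le : ∀ x, ‖Φ x‖ ≤ 1) : ∫ x, ‖Φ x - ∫ y, Φ y ∂ν‖ ^ 2 ∂ν ≤ 1 := by
  set c := ∫ y, Φ y ∂ν
  have hint := integrable_of_norm_le_one (ν := ν) hΦ hΦ_le
  have hsub : Integrable (fun x => ⟪c, Φ x - c⟫) ν :=
    (hint.sub (integrable_const c)).const_inner c
  have hsq : Integrable (fun x => ‖Φ x - c‖ ^ 2) ν := by
    refine integrable_of_abs_le (B := 2 ^ 2)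
      ((hΦ.sub stronglyMeasurable_const).norm.measurable.pow_const 2) fun x => ?_
    rw [abs_of_nonneg (by positivity)]
    gcongr
    exact norm_sub_integral_le_two hΦ_le x
  calc ∫ x, ‖Φ x - c‖ ^ 2 ∂ν
      ≤ ∫ x, (1 - ‖c‖ ^ 2 - 2 * ⟪c, Φ x - c⟫) ∂ν := by
        refine integral_mono hsq ((integrable_const _).sub (hsub.const_mul 2)) fun x => ?_
        have h := norm_add_sq_real c (Φ x - c)
        rw [add_sub_cancel] at h
        have := pow_le_one₀ (n := 2) (norm_nonneg (Φ x)) (hΦ_le x)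
        linarith
    _ = 1 - ‖c‖ ^ 2 := by
        rw [integral_sub (integrable_const _) (hsub.const_mul 2), integral_const_mul,
          integral_inner_sub_integral hint]
        simp
    _ ≤ 1 := by linarith [sq_nonneg ‖c‖]

lemma sum_integral_inner_sub_integral_sq_le_one {ι : Type*} [Fintype ι] [IsProbabilityMeasure ν]
    (hΦ : StronglyMeasurable Φ) (hΦ_le : ∀ x, ‖Φ x‖ ≤ 1) (b : OrthonormalBasis ι ℝ H) :
    ∑ i, ∫ x, ⟪b i, Φ x - ∫ y, Φ y ∂ν⟫ ^ 2 ∂ν ≤ 1 := by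
  have hmeas i : Measurable fun x => ⟪b i, Φ x - ∫ y, Φ y ∂ν⟫ :=
    (stronglyMeasurable_const.inner (hΦ.sub stronglyMeasurable_const)).measurable
  have hint i : Integrable (fun x => ⟪b i, Φ x - ∫ y, Φ y ∂ν⟫ ^ 2) ν :=
    integrable_of_abs_le (B := 2 ^ 2) ((hmeas i).pow_const 2) fun x => by
      rw [abs_pow]
      exact pow_le_pow_left₀ (abs_nonneg _)
        (abs_inner_sub_integral_le_two hΦ_le (b.norm_eq_one i) x) 2
  rw [← integral_finsetSum _ fun i _ => hint i]
  simp_rw [← sq_abs ⟪b _, _⟫, ← norm_eq_abs, b.sum_sq_norm_inner_right]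
  exact integral_norm_sub_integral_sq_le_one hΦ hΦ_le

lemma isPerturbation_inner [IsProbabilityMeasure ν] (hΦ : StronglyMeasurable Φ)
    (hΦ_le : ∀ x, ‖Φ x‖ ≤ 1) (hτ : |τ| ≤ 1 / 4) {v : H} (hv : ‖v‖ = 1) :
    IsPerturbation ν fun x => τ * ⟪v, Φ x - ∫ y, Φ y ∂ν⟫ where
  measurable :=
    (stronglyMeasurable_const.inner (hΦ.sub stronglyMeasurable_const)).measurable.const_mul τ
  abs_le_half x := by
    rw [abs_mul]
    calc |τ| * |⟪v, Φ x - ∫ y, Φ y ∂ν⟫| ≤ 1 / 4 * 2 := by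
          gcongr
          exact abs_inner_sub_integral_le_two hΦ_le hv x
      _ = 1 / 2 := by norm_num
  integral_eq_zero := by
    rw [integral_const_mul, integral_inner_sub_integral (integrable_of_norm_le_one hΦ hΦ_le),
      mul_zero]

lemma IsAlmostMinimizer.sq_mul_integral_kernel_mul_le [IsProbabilityMeasure σ]
    (hν : IsAlmostMinimizer σ K t ε ν)
    (hΦ : StronglyMeasurable Φ) (hΦ_le : ∀ x, ‖Φ x‖ ≤ 1) (hτ : |τ| ≤ 1 / 4)
    {v : H} (hv : ‖v‖ = 1) :
    τ ^ 2 * (2 * t * ∫ p, ⟪v, Φ p.1 - ∫ y, Φ y ∂ν⟫ * ⟪v, Φ p.2 - ∫ y, Φ y ∂ν⟫ * K p.1 p.2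
        ∂(ν.prod ν))
      ≤ τ ^ 2 * (1 + 20 * τ ^ 2) * ∫ x, ⟪v, Φ x - ∫ y, Φ y ∂ν⟫ ^ 2 ∂ν + 2 * ε := by
  have := hν.isProbabilityMeasure
  set c := ∫ y, Φ y ∂ν
  have hw : IsPerturbation ν fun x => τ * ⟪v, Φ x - c⟫ := isPerturbation_inner hΦ hΦ_le hτ hv
  have hmeas := hw.measurable
  have hbdd (n : ℕ) : Integrable (fun x => (τ * ⟪v, Φ x - c⟫) ^ n) ν :=
    integrable_of_abs_le (B := (1 / 2) ^ n) (by fun_prop) fun x => by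
      rw [abs_pow]
      exact pow_le_pow_left₀ (abs_nonneg _) (hw.abs_le_half x) n
  have hquartic (x : X) : (τ * ⟪v, Φ x - c⟫) ^ 2 + 5 * (τ * ⟪v, Φ x - c⟫) ^ 4
      ≤ (1 + 20 * τ ^ 2) * (τ * ⟪v, Φ x - c⟫) ^ 2 := by
    have h : ⟪v, Φ x - c⟫ ^ 2 ≤ 2 ^ 2 := by
      rw [← sq_abs]
      gcongr
      exact abs_inner_sub_integral_le_two hΦ_le hv x
    linear_combination 5 * τ ^ 4 * ⟪v, Φ x - c⟫ ^ 2 * h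
  calc τ ^ 2 * (2 * t * ∫ p, ⟪v, Φ p.1 - c⟫ * ⟪v, Φ p.2 - c⟫ * K p.1 p.2 ∂(ν.prod ν))
      = 2 * t * ∫ p, τ * ⟪v, Φ p.1 - c⟫ * (τ * ⟪v, Φ p.2 - c⟫) * K p.1 p.2 ∂(ν.prod ν) := by
        rw [mul_left_comm, ← integral_const_mul]
        congr 2 with p
        ring
    _ ≤ ∫ x, ((τ * ⟪v, Φ x - c⟫) ^ 2 + 5 * (τ * ⟪v, Φ x - c⟫) ^ 4) ∂ν + 2 * ε :=
        hν.two_mul_integral_kernel_le hw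
    _ ≤ ∫ x, (1 + 20 * τ ^ 2) * (τ * ⟪v, Φ x - c⟫) ^ 2 ∂ν + 2 * ε := by
        gcongr ?_ + _
        exact integral_mono ((hbdd 2).add ((hbdd 4).const_mul 5)) ((hbdd 2).const_mul _) hquartic
    _ = τ ^ 2 * (1 + 20 * τ ^ 2) * ∫ x, ⟪v, Φ x - c⟫ ^ 2 ∂ν + 2 * ε := by
        simp_rw [mul_pow, integral_const_mul]
        ring

/-- Summing the second variations in the directions of an orthonormal basis turns the products of
the coordinates into inner products. -/
lemma IsAlmostMinimizer.sq_mul_integral_inner_mul_kernel_le [FiniteDimensional ℝ H]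
    [IsProbabilityMeasure σ] (hν : IsAlmostMinimizer σ K t ε ν)
    (hΦ : StronglyMeasurable Φ) (hΦ_le : ∀ x, ‖Φ x‖ ≤ 1) (hτ : |τ| ≤ 1 / 4) :
    τ ^ 2 * (2 * t * ∫ p, ⟪Φ p.1 - ∫ y, Φ y ∂ν, Φ p.2 - ∫ y, Φ y ∂ν⟫ * K p.1 p.2 ∂(ν.prod ν))
      ≤ τ ^ 2 * (1 + 20 * τ ^ 2) + 2 * Module.finrank ℝ H * ε := by
  have := hν.isProbabilityMeasure
  set c := ∫ y, Φ y ∂ν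
  let b := stdOrthonormalBasis ℝ H
  have hmeas i : Measurable fun x => ⟪b i, Φ x - c⟫ :=
    (stronglyMeasurable_const.inner (hΦ.sub stronglyMeasurable_const)).measurable
  have hcoord_le i := abs_inner_sub_integral_le_two hΦ_le (b.norm_eq_one i) (ν := ν)
  have hkernel : ∑ i, ∫ p, ⟪b i, Φ p.1 - c⟫ * ⟪b i, Φ p.2 - c⟫ * K p.1 p.2 ∂(ν.prod ν)
      = ∫ p, ⟪Φ p.1 - c, Φ p.2 - c⟫ * K p.1 p.2 ∂(ν.prod ν) := by
    rw [← integral_finsetSum _ fun i _ =>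
      hν.integrable_mul_mul_kernel (hmeas i) (hmeas i) (hcoord_le i) (hcoord_le i)]
    congr with p
    rw [← Finset.sum_mul, ← b.sum_inner_mul_inner]
    simp only [real_inner_comm]
  calc τ ^ 2 * (2 * t * ∫ p, ⟪Φ p.1 - c, Φ p.2 - c⟫ * K p.1 p.2 ∂(ν.prod ν))
      = ∑ i, τ ^ 2 * (2 * t * ∫ p, ⟪b i, Φ p.1 - c⟫ * ⟪b i, Φ p.2 - c⟫ * K p.1 p.2
          ∂(ν.prod ν)) := by
        rw [← Finset.mul_sum, ← Finset.mul_sum, hkernel]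
    _ ≤ ∑ i, (τ ^ 2 * (1 + 20 * τ ^ 2) * ∫ x, ⟪b i, Φ x - c⟫ ^ 2 ∂ν + 2 * ε) :=
        Finset.sum_le_sum fun i _ =>
          hν.sq_mul_integral_kernel_mul_le hΦ hΦ_le hτ (b.norm_eq_one i)
    _ = τ ^ 2 * (1 + 20 * τ ^ 2) * ∑ i, ∫ x, ⟪b i, Φ x - c⟫ ^ 2 ∂ν
          + 2 * Module.finrank ℝ H * ε := by
        rw [Finset.sum_add_distrib, ← Finset.mul_sum, Fin.sum_const, nsmul_eq_mul]
        ring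
    _ ≤ τ ^ 2 * (1 + 20 * τ ^ 2) + 2 * Module.finrank ℝ H * ε := by
        gcongr ?_ + _
        exact mul_le_of_le_one_right (by positivity)
          (sum_integral_inner_sub_integral_sq_le_one hΦ hΦ_le b)

end Directions

/-! ### Purity and moments -/

section Purity

variable {X : Type*} [MeasurableSpace X] {ν : Measure X}

lemma integral_prod_inner {H : Type*} [NormedAddCommGroup H] [InnerProductSpace ℝ H]
    [CompleteSpace H] [SFinite ν] {Φ Ψ : X → H} (hΦ : Integrable Φ ν) (hΨ : Integrable Ψ ν) :
    ∫ p, ⟪Φ p.1, Ψ p.2⟫ ∂(ν.prod ν) = ⟪∫ x, Φ x ∂ν, ∫ x, Ψ x ∂ν⟫ :=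
  integral_prod_bilin (innerSL ℝ : H →L[ℝ] H →L[ℝ] ℝ) hΦ hΨ

variable {ι : Type*}

/-- The matrix of the orthogonal projection onto the line of a unit vector of `ℂ^ι`, as an element
of the Hilbert–Schmidt space. -/
def rankOne (v : EuclideanSpace ℂ ι) : EuclideanSpace ℂ (ι × ι) :=
  WithLp.toLp 2 fun q => v q.1 * (starRingEnd ℂ) (v q.2)

lemma continuous_rankOne : Continuous (rankOne : EuclideanSpace ℂ ι → _) := by
  unfold rankOne
  fun_prop

variable [Fintype ι]

lemma real_inner_eq_re_inner_complex (x y : EuclideanSpace ℂ ι) : ⟪x, y⟫ = (inner ℂ x y).re := by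
  simp [PiLp.inner_apply, Complex.inner]

lemma inner_rankOne (v w : EuclideanSpace ℂ ι) :
    ⟪rankOne v, rankOne w⟫ = ‖inner ℂ v w‖ ^ 2 := by
  have h : inner ℂ (rankOne v) (rankOne w) = inner ℂ v w * (starRingEnd ℂ) (inner ℂ v w) := by
    simp only [PiLp.inner_apply, rankOne, RCLike.inner_apply, map_sum, map_mul, Complex.conj_conj,
      Finset.sum_mul_sum, Fintype.sum_prod_type]
    exact Finset.sum_congr rfl fun i _ => Finset.sum_congr rfl fun j _ => by ring
  rw [real_inner_eq_re_inner_complex, h, Complex.mul_conj, Complex.ofReal_re,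
    Complex.normSq_eq_norm_sq]

lemma norm_rankOne (v : EuclideanSpace ℂ ι) : ‖rankOne v‖ = ‖v‖ ^ 2 := by
  rw [← sq_eq_sq₀ (norm_nonneg _) (by positivity), ← real_inner_self_eq_norm_sq, inner_rankOne,
    inner_self_eq_norm_sq_to_K, norm_pow, norm_algebraMap', norm_norm]

/-- The purity `tr ρ²` of a mixture `ρ` of pure states is minimal for the maximally mixed state. -/
lemma one_le_card_mul_integral_norm_inner_sq [IsProbabilityMeasure ν]
    {c : X → EuclideanSpace ℂ ι} (hc : StronglyMeasurable c) (hc_norm : ∀ x, ‖c x‖ = 1) :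
    1 ≤ Fintype.card ι * ∫ p, ‖inner ℂ (c p.1) (c p.2)‖ ^ 2 ∂(ν.prod ν) := by
  classical
  have hnorm (x : X) : ‖rankOne (c x)‖ = 1 := by rw [norm_rankOne, hc_norm, one_pow]
  have hint : Integrable (fun x => rankOne (c x)) ν :=
    integrable_of_norm_le_one (continuous_rankOne.comp_stronglyMeasurable hc) fun x => (hnorm x).le
  let identity : EuclideanSpace ℂ (ι × ι) := WithLp.toLp 2 fun q => if q.1 = q.2 then 1 else 0
  have hidentity : ‖identity‖ ^ 2 = Fintype.card ι := by
    simp [identity, EuclideanSpace.norm_sq_eq, Fintype.sum_prod_type, apply_ite norm,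
      ite_pow, -Finset.sum_boole]
  have htrace (v : EuclideanSpace ℂ ι) : ⟪identity, rankOne v⟫ = ‖v‖ ^ 2 := by
    simp [identity, rankOne, PiLp.inner_apply, Complex.inner, Fintype.sum_prod_type,
      EuclideanSpace.norm_sq_eq, apply_ite Complex.re, ← Complex.normSq_apply,
      Complex.normSq_eq_norm_sq]
  calc (1 : ℝ) = ⟪identity, ∫ x, rankOne (c x) ∂ν⟫ ^ 2 := by
        rw [← integral_inner hint]
        simp only [htrace, hc_norm]
        simp
    _ ≤ (‖identity‖ * ‖∫ x, rankOne (c x) ∂ν‖) ^ 2 := by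
        rw [← sq_abs]
        gcongr
        exact abs_real_inner_le_norm _ _
    _ = Fintype.card ι * ∫ p, ‖inner ℂ (c p.1) (c p.2)‖ ^ 2 ∂(ν.prod ν) := by
        rw [mul_pow, hidentity, ← real_inner_self_eq_norm_sq, ← integral_prod_inner hint hint]
        simp only [inner_rankOne]

end Purity

section Moments

variable {Y : Type*} [MeasurableSpace Y] {P : Measure Y} {ι : Type*} {q : ι → Y → ℝ} {φ : Y → ℝ}
  {m : ι → ℝ} {S : ℝ}

lemma le_integral_of_hasSum (hq : ∀ i, Integrable (q i) P) (hφ : Integrable φ P)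
    (hq_nonneg : ∀ᵐ y ∂P, ∀ i, 0 ≤ q i y) (hsum : ∀ᵐ y ∂P, HasSum (fun i => q i y) (φ y))
    (hm : ∀ i, m i ≤ ∫ y, q i y ∂P) (hS : HasSum m S) : S ≤ ∫ y, φ y ∂P := by
  refine hasSum_le_of_sum_le hS fun s => ?_
  calc ∑ i ∈ s, m i ≤ ∑ i ∈ s, ∫ y, q i y ∂P := Finset.sum_le_sum fun i _ => hm i
    _ = ∫ y, ∑ i ∈ s, q i y ∂P := (integral_finsetSum s fun i _ => hq i).symm
    _ ≤ ∫ y, φ y ∂P := by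
        refine integral_mono_ae (integrable_finsetSum s fun i _ => hq i) hφ ?_
        filter_upwards [hq_nonneg, hsum] with y hy hy'
        exact sum_le_hasSum s (fun i _ => hy i) hy'

lemma hasSum_sub_succ {u : ℕ → ℝ} (hu : Antitone u) (hu0 : Tendsto u atTop (nhds 0)) :
    HasSum (fun k => u k - u (k + 1)) (u 0) := by
  rw [hasSum_iff_tendsto_nat_of_nonneg fun k => sub_nonneg.2 (hu k.le_succ)]
  simpa only [Finset.sum_range_sub', sub_zero] using tendsto_const_nhds.sub hu0

lemma hasSum_one_div_mul : HasSum (fun k : ℕ => 1 / ((k + 1) * (k + 2) : ℝ)) 1 := by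
  convert! hasSum_sub_succ (u := fun k => 1 / (k + 1 : ℝ)) ?_
    tendsto_one_div_add_atTop_nhds_zero_nat using 1
  · ext k
    push_cast
    field_simp
    ring
  · simp
  · exact fun a b h => one_div_le_one_div_of_le (by positivity) (by gcongr)

lemma hasSum_one_div_mul_mul :
    HasSum (fun k : ℕ => 1 / ((k + 1) * (k + 2) * (k + 3) : ℝ)) (1 / 4) := by
  convert! hasSum_sub_succ (u := fun k => 1 / (2 * (k + 1) * (k + 2) : ℝ)) ?_ ?_ using 1
  · ext k
    push_cast
    field_simp
    ring
  · norm_num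
  · exact fun a b h => one_div_le_one_div_of_le (by positivity) (by gcongr)
  · refine squeeze_zero (fun k => by positivity) (fun k => ?_)
      tendsto_one_div_add_atTop_nhds_zero_nat
    refine one_div_le_one_div_of_le (by positivity) ?_
    nlinarith [(k.cast_nonneg : (0 : ℝ) ≤ k)]

lemma hasSum_one_sub_pow_div_mul {s : ℝ} (hs : 0 < s) (hs1 : s ≤ 1) :
    HasSum (fun k : ℕ => (1 - s) ^ (k + 2) / ((k + 1) * (k + 2))) (s * log s + (1 - s)) := by
  have hlog := hasSum_pow_div_log_of_abs_lt_one (x := 1 - s)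
    (abs_lt.2 ⟨by linarith, by linarith⟩)
  rw [sub_sub_cancel] at hlog
  convert! (hlog.mul_left (1 - s)).sub ((hasSum_nat_add_iff' 1).2 hlog) using 1
  · ext k
    push_cast
    field_simp
    ring
  · simp
    ring

end Moments

/-! ### Stereographic projection -/

section Stereographic

variable {F : Type*} [NormedAddCommGroup F]

/-- The logarithmic weight `log (1 + |x|²)`: the conformal factor of the inverse stereographic
projection is `2 exp (-logWeight x)`. -/
def logWeight (x : F) : ℝ := log (1 + ‖x‖ ^ 2)

/-- The squared distance of the stereographic images of two points on the sphere of diameter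
one. -/
def chordSq (x y : F) : ℝ := ‖x - y‖ ^ 2 / ((1 + ‖x‖ ^ 2) * (1 + ‖y‖ ^ 2))

/-- The logarithmic kernel of the sphere in stereographic coordinates. On the diagonal the junk
value `log 0 = 0` stands for `+∞`. -/
def logKernel (x y : F) : ℝ := -log (chordSq x y)

lemma one_add_norm_sq_pos (x : F) : 0 < 1 + ‖x‖ ^ 2 := by positivity

lemma continuous_logWeight : Continuous (logWeight : F → ℝ) :=
  .log (by fun_prop) fun x => (one_add_norm_sq_pos x).ne'

lemma continuous_chordSq : Continuous fun p : F × F => chordSq p.1 p.2 :=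
  .div (by fun_prop) (by fun_prop) fun p => by positivity

lemma logWeight_sub_le (x y : F) :
    logWeight y - logWeight x ≤ (‖y‖ ^ 2 - ‖x‖ ^ 2) / (1 + ‖x‖ ^ 2) := by
  rw [logWeight, logWeight, ← log_div (one_add_norm_sq_pos y).ne' (one_add_norm_sq_pos x).ne']
  refine (log_le_sub_one_of_pos (by positivity)).trans_eq ?_
  field_simp
  ring

lemma chordSq_nonneg (x y : F) : 0 ≤ chordSq x y := by
  unfold chordSq
  positivity

lemma chordSq_pos {x y : F} (h : x ≠ y) : 0 < chordSq x y := by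
  have : 0 < ‖x - y‖ := norm_pos_iff.2 (sub_ne_zero.2 h)
  unfold chordSq
  positivity

lemma logKernel_eq {x y : F} (h : x ≠ y) :
    logKernel x y = logWeight x + logWeight y - 2 * log ‖x - y‖ := by
  have hxy : ‖x - y‖ ≠ 0 := norm_ne_zero_iff.2 (sub_ne_zero.2 h)
  rw [logKernel, chordSq, logWeight, logWeight, log_div (by positivity) (by positivity),
    log_mul (by positivity) (by positivity), log_pow]
  push_cast
  ring

section Affine

variable [NormedSpace ℝ F]

lemma chordSq_map {G : Type*} [NormedAddCommGroup G] [NormedSpace ℝ G] (e : F ≃ₗᵢ[ℝ] G) (x y : F) :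
    chordSq (e x) (e y) = chordSq x y := by
  rw [chordSq, chordSq, ← map_sub, e.norm_map, e.norm_map, e.norm_map]

lemma logWeight_smul_add_le (r : ℝ) (v x : F) :
    logWeight (r • x + v) ≤ logWeight x + log (1 + 2 * r ^ 2 + 2 * ‖v‖ ^ 2) := by
  have h : ‖r • x + v‖ ^ 2 ≤ 2 * (r ^ 2 * ‖x‖ ^ 2 + ‖v‖ ^ 2) := calc
    ‖r • x + v‖ ^ 2 ≤ (‖r • x‖ + ‖v‖) ^ 2 := by gcongr; exact norm_add_le _ _
    _ ≤ 2 * (‖r • x‖ ^ 2 + ‖v‖ ^ 2) := add_sq_le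
    _ = 2 * (r ^ 2 * ‖x‖ ^ 2 + ‖v‖ ^ 2) := by rw [norm_smul, mul_pow, norm_eq_abs, sq_abs]
  rw [logWeight, logWeight, ← log_mul (by positivity) (by positivity)]
  gcongr
  linear_combination h + 2 * sq_nonneg r + sq_nonneg ‖x‖
    + 2 * mul_nonneg (sq_nonneg ‖v‖) (sq_nonneg ‖x‖)

lemma exists_abs_logWeight_smul_add_sub_le {r : ℝ} (hr : r ≠ 0) (v : F) :
    ∃ B, ∀ x, |logWeight (r • x + v) - logWeight x| ≤ B := by
  refine ⟨max (log (1 + 2 * r ^ 2 + 2 * ‖v‖ ^ 2))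
    (log (1 + 2 * r⁻¹ ^ 2 + 2 * ‖-(r⁻¹ • v)‖ ^ 2)), fun x => abs_sub_le_iff.2 ⟨?_, ?_⟩⟩
  · exact le_max_of_le_left (sub_le_iff_le_add'.2 (logWeight_smul_add_le r v x))
  · have h := logWeight_smul_add_le r⁻¹ (-(r⁻¹ • v)) (r • x + v)
    rw [smul_add, inv_smul_smul₀ hr, add_neg_cancel_right] at h
    exact le_max_of_le_right (sub_le_iff_le_add'.2 h)

lemma logKernel_smul_add {r : ℝ} (hr : r ≠ 0) (v : F) {x y : F} (h : x ≠ y) :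
    logKernel (r • x + v) (r • y + v) = logKernel x y - 2 * log r
      + (logWeight (r • x + v) - logWeight x) + (logWeight (r • y + v) - logWeight y) := by
  have hxy : ‖x - y‖ ≠ 0 := norm_ne_zero_iff.2 (sub_ne_zero.2 h)
  rw [logKernel_eq h, logKernel_eq (by simpa [hr] using h), add_sub_add_right_eq_sub, ← smul_sub,
    norm_smul, log_mul (norm_ne_zero_iff.2 hr) hxy, norm_eq_abs, log_abs]
  ring

end Affine

variable [InnerProductSpace ℝ F]

/-- The inverse stereographic projection onto the unit sphere of `F × ℝ`. -/
def stereo (x : F) : WithLp 2 (F × ℝ) :=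
  WithLp.toLp 2 ((2 / (1 + ‖x‖ ^ 2)) • x, (‖x‖ ^ 2 - 1) / (1 + ‖x‖ ^ 2))

lemma stereo_fst (x : F) : (stereo x).fst = (2 / (1 + ‖x‖ ^ 2)) • x := rfl

lemma stereo_snd (x : F) : (stereo x).snd = (‖x‖ ^ 2 - 1) / (1 + ‖x‖ ^ 2) := rfl

lemma continuous_stereo : Continuous (stereo : F → _) := by
  have h (x : F) : 1 + ‖x‖ ^ 2 ≠ 0 := (one_add_norm_sq_pos x).ne'
  unfold stereo
  fun_prop (disch := assumption)

lemma inner_stereo (x y : F) : ⟪stereo x, stereo y⟫ = 1 - 2 * chordSq x y := by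
  simp only [stereo, chordSq, WithLp.prod_inner_apply, inner_smul_left, inner_smul_right,
    norm_sub_sq_real, RCLike.inner_apply, conj_trivial]
  field_simp
  ring

lemma norm_stereo (x : F) : ‖stereo x‖ = 1 := by
  have h := inner_stereo x x
  rw [real_inner_self_eq_norm_sq, chordSq, sub_self, norm_zero] at h
  exact (pow_eq_one_iff_of_nonneg (norm_nonneg _) two_ne_zero).1 (by simpa using h)

lemma chordSq_le_one (x y : F) : chordSq x y ≤ 1 := by
  have h := abs_real_inner_le_norm (stereo x) (stereo y)
  rw [inner_stereo, norm_stereo, norm_stereo, abs_le] at h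
  linarith

lemma logKernel_nonneg (x y : F) : 0 ≤ logKernel x y :=
  neg_nonneg.2 (log_nonpos (chordSq_nonneg x y) (chordSq_le_one x y))

lemma logWeight_smul_add_sub_le (r : ℝ) (v x : F) :
    logWeight (r • x + v) - logWeight x
      ≤ (r ^ 2 - 1) / 2 * (1 + (stereo x).snd) + r * ⟪v, (stereo x).fst⟫ + ‖v‖ ^ 2 := by
  have hv : ‖v‖ ^ 2 / (1 + ‖x‖ ^ 2) ≤ ‖v‖ ^ 2 :=
    div_le_self (sq_nonneg _) (le_add_of_nonneg_right (sq_nonneg _))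
  refine (logWeight_sub_le x (r • x + v)).trans (le_of_eq_of_le ?_ (add_le_add_right hv _))
  rw [norm_add_sq_real, norm_smul, mul_pow, norm_eq_abs, sq_abs, inner_smul_left, real_inner_comm]
  simp only [stereo_fst, stereo_snd, inner_smul_right, conj_trivial]
  field_simp
  ring

end Stereographic

/-! ### The sphere measure -/

section SphereMeasure

lemma mu2_pos (x : E2) : 0 < mu2 x := by
  unfold mu2
  positivity

lemma continuous_mu2 : Continuous mu2 :=
  .div (by fun_prop) (by fun_prop) fun x => by positivity

lemma log_mu2 (x : E2) : log (mu2 x) = -(2 * logWeight x + log π) := by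
  rw [mu2, logWeight, one_div, log_inv, log_mul (by positivity) (by positivity), log_pow]
  push_cast
  ring

lemma integrable_rpow_one_add_norm_sq {a : ℝ} (ha : a < -1) :
    Integrable fun x : E2 => (1 + ‖x‖ ^ 2) ^ a := by
  have h := integrable_rpow_neg_one_add_norm_sq (E := E2) (μ := volume) (r := -2 * a)
    (by rw [finrank_euclideanSpace_fin]; push_cast; linarith)
  simpa using h

lemma integrable_mu2 : Integrable mu2 := by
  refine ((integrable_rpow_one_add_norm_sq (a := -2) (by norm_num)).const_mul π⁻¹).congr
    (ae_of_all _ fun x => ?_)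
  have h := one_add_norm_sq_pos x
  change π⁻¹ * (1 + ‖x‖ ^ 2) ^ (-2 : ℝ) = 1 / (π * (1 + ‖x‖ ^ 2) ^ 2)
  rw [rpow_neg h.le, rpow_two, one_div, mul_inv]

lemma integral_Ioi_mul_inv_one_add_sq_sq :
    ∫ r in Set.Ioi (0 : ℝ), r * ((1 + r ^ 2) ^ 2)⁻¹ = 1 / 2 := by
  have hpos (r : ℝ) : 1 + r ^ 2 ≠ 0 := by positivity
  have hderiv (r : ℝ) :
      HasDerivAt (fun r : ℝ => -(1 + r ^ 2)⁻¹ / 2) (r * ((1 + r ^ 2) ^ 2)⁻¹) r := by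
    refine ((((hasDerivAt_pow 2 r).const_add 1).inv (hpos r)).neg.div_const 2).congr_deriv ?_
    have := hpos r
    field_simp
    norm_num [mul_comm]
  have htendsto : Tendsto (fun r : ℝ => -(1 + r ^ 2)⁻¹ / 2) atTop (nhds (-0 / 2)) :=
    (tendsto_inv_atTop_zero.comp (tendsto_atTop_add_const_left _ _
      (tendsto_pow_atTop two_ne_zero))).neg.div_const 2
  rw [integral_Ioi_of_hasDerivAt_of_nonneg (hderiv 0).continuousAt.continuousWithinAt
    (fun r _ => hderiv r) (fun r hr => mul_nonneg (le_of_lt hr) (by positivity)) htendsto]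
  norm_num

lemma integral_mu2 : ∫ x, mu2 x = 1 := by
  have hball : (volume : Measure E2).real (Metric.ball 0 1) = π := by
    simp [Measure.real, EuclideanSpace.volume_ball, one_add_one_eq_two, pi_pos.le]
  calc ∫ x, mu2 x = π⁻¹ * ∫ x : E2, ((1 + ‖x‖ ^ 2) ^ 2)⁻¹ := by
        simp only [mu2, one_div, mul_inv, integral_const_mul]
    _ = π⁻¹ * (2 * (π * ∫ r in Set.Ioi (0 : ℝ), r * ((1 + r ^ 2) ^ 2)⁻¹)) := by
        rw [integral_fun_norm_addHaar volume fun r : ℝ => ((1 + r ^ 2) ^ 2)⁻¹, hball]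
        simp
    _ = 1 := by
        rw [integral_Ioi_mul_inv_one_add_sq_sq]
        field_simp

/-- The uniform probability measure of the sphere, transported to the plane by stereographic
projection. -/
def sphereMeasure : Measure E2 := volume.withDensity fun x => ENNReal.ofReal (mu2 x)

instance : IsProbabilityMeasure sphereMeasure :=
  isProbabilityMeasure_withDensity_ofReal integrable_mu2 (ae_of_all _ fun x => (mu2_pos x).le)
    integral_mu2

instance : NullSingletonClass sphereMeasure := by
  unfold sphereMeasure
  infer_instance

end SphereMeasure

/-! ### Coherent states -/

section Coherent

variable {k : ℕ}

/-- The coherent states of the spin representation of dimension `k + 1`: the unit vectors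
proportional to `(1, z, …, z ^ k)` in the orthogonal basis of squared norms `1 / (k choose j)`. -/
def coherentState (k : ℕ) (z : ℂ) : EuclideanSpace ℂ (Fin (k + 1)) :=
  WithLp.toLp 2 fun j => √(k.choose j) * z ^ (j : ℕ) / (√(1 + ‖z‖ ^ 2) ^ k : ℝ)

lemma continuous_coherentState (k : ℕ) : Continuous (coherentState k) := by
  have h (z : ℂ) : ((√(1 + ‖z‖ ^ 2) ^ k : ℝ) : ℂ) ≠ 0 := by
    rw [Complex.ofReal_ne_zero]
    positivity
  unfold coherentState
  fun_prop (disch := assumption)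

lemma inner_coherentState (k : ℕ) (z w : ℂ) :
    inner ℂ (coherentState k z) (coherentState k w)
      = ((1 + (starRingEnd ℂ) z * w) / (√(1 + ‖z‖ ^ 2) * √(1 + ‖w‖ ^ 2) : ℝ)) ^ k := by
  rw [div_pow, add_comm 1, add_pow, Finset.sum_div, Finset.sum_range, PiLp.inner_apply]
  refine Finset.sum_congr rfl fun j _ => ?_
  have hsqrt : ((√(k.choose j) : ℝ) : ℂ) * (√(k.choose j) : ℝ) = k.choose j := by
    rw [← Complex.ofReal_mul, mul_self_sqrt (by positivity), Complex.ofReal_natCast]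
  simp only [coherentState, RCLike.inner_apply, map_div₀, map_mul, map_pow, Complex.conj_ofReal]
  rw [← hsqrt]
  push_cast
  ring

lemma one_sub_chordSq (z w : ℂ) :
    1 - chordSq z w = ‖1 + (starRingEnd ℂ) z * w‖ ^ 2 / ((1 + ‖z‖ ^ 2) * (1 + ‖w‖ ^ 2)) := by
  rw [chordSq, eq_div_iff (by positivity), sub_mul, div_mul_cancel₀ _ (by positivity)]
  simp only [Complex.sq_norm, Complex.normSq_apply, Complex.add_re, Complex.add_im, Complex.sub_re,
    Complex.sub_im, Complex.mul_re, Complex.mul_im, Complex.conj_re, Complex.conj_im,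
    Complex.one_re, Complex.one_im]
  ring

lemma norm_inner_coherentState_sq (k : ℕ) (z w : ℂ) :
    ‖inner ℂ (coherentState k z) (coherentState k w)‖ ^ 2 = (1 - chordSq z w) ^ k := by
  rw [inner_coherentState, norm_pow, pow_right_comm, norm_div, Complex.norm_real, div_pow,
    norm_eq_abs, sq_abs, mul_pow, sq_sqrt (by positivity), sq_sqrt (by positivity), one_sub_chordSq]

lemma norm_coherentState (k : ℕ) (z : ℂ) : ‖coherentState k z‖ = 1 := by
  have h := norm_inner_coherentState_sq k z z
  have h4 : ‖coherentState k z‖ ^ 4 = 1 := by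
    simpa [inner_self_eq_norm_sq_to_K, chordSq, ← pow_mul] using h
  exact (pow_eq_one_iff_of_nonneg (norm_nonneg _) four_ne_zero).1 h4

lemma one_div_add_one_le_integral_one_sub_chordSq_pow (ν : Measure E2) [IsProbabilityMeasure ν]
    (k : ℕ) : 1 / (k + 1 : ℝ) ≤ ∫ p, (1 - chordSq p.1 p.2) ^ k ∂(ν.prod ν) := by
  let e := Complex.orthonormalBasisOneI.repr.symm
  have h := one_le_card_mul_integral_norm_inner_sq (ν := ν) (c := fun x => coherentState k (e x))
    ((continuous_coherentState k).comp e.continuous).stronglyMeasurable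
    fun x => norm_coherentState k _
  simp only [norm_inner_coherentState_sq, e, chordSq_map, Fintype.card_fin, Nat.cast_add_one] at h
  exact (div_le_iff₀' (by positivity)).2 h

end Coherent

/-! ### Moments of the chordal distance -/

section ChordalMoments

/-- The mean of the stereographic image of a measure. The conformal group can move it to the centre
of the sphere. -/
def barycenter (ν : Measure E2) : WithLp 2 (E2 × ℝ) := ∫ x, stereo x ∂ν

variable {ν : Measure E2}

lemma integrable_stereo [IsFiniteMeasure ν] : Integrable stereo ν :=
  .of_bound continuous_stereo.aestronglyMeasurable 1 (ae_of_all _ fun x => (norm_stereo x).le)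

lemma FiniteFreeEnergy.integrable_chordSq_mul_logKernel
    (hν : FiniteFreeEnergy sphereMeasure logKernel ν) :
    Integrable (fun p : E2 × E2 => chordSq p.1 p.2 * logKernel p.1 p.2) (ν.prod ν) :=
  hν.integrable_kernel.bdd_mul (c := 1) continuous_chordSq.aestronglyMeasurable
    (ae_of_all _ fun p => by
      rw [norm_of_nonneg (chordSq_nonneg _ _)]
      exact chordSq_le_one _ _)

variable [IsProbabilityMeasure ν]

lemma norm_barycenter_le_one : ‖barycenter ν‖ ≤ 1 :=
  norm_integral_le_one fun x => (norm_stereo x).le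

lemma integrable_one_sub_chordSq_pow (k : ℕ) :
    Integrable (fun p : E2 × E2 => (1 - chordSq p.1 p.2) ^ k) (ν.prod ν) := by
  refine integrable_of_abs_le (B := 1) ((continuous_const.sub continuous_chordSq).pow k).measurable
    fun p => ?_
  rw [abs_pow]
  refine pow_le_one₀ (abs_nonneg _) (abs_le.2 ⟨?_, ?_⟩) <;>
  linarith [chordSq_nonneg p.1 p.2, chordSq_le_one p.1 p.2]

lemma integral_one_sub_chordSq :
    ∫ p, (1 - chordSq p.1 p.2) ∂(ν.prod ν) = (1 + ‖barycenter ν‖ ^ 2) / 2 := by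
  have h := integral_prod_inner (integrable_stereo (ν := ν)) (integrable_stereo (ν := ν))
  simp only [inner_stereo] at h
  have hint := (integrable_one_sub_chordSq_pow (ν := ν) 1).const_mul 2
  have hsplit (p : E2 × E2) :
      1 - 2 * chordSq p.1 p.2 = 2 * (1 - chordSq p.1 p.2) ^ 1 - 1 := by ring
  simp only [hsplit] at h
  rw [integral_sub hint (integrable_const 1), integral_const_mul, real_inner_self_eq_norm_sq] at h
  simp only [pow_one, integral_const, probReal_univ, one_smul] at h
  rw [barycenter]
  linarith

lemma one_div_mul_le_integral_one_sub_chordSq_pow_div (k : ℕ) {a : ℝ} (ha : 0 ≤ a) :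
    1 / (a * (k + 1)) ≤ ∫ p, (1 - chordSq p.1 p.2) ^ k / a ∂(ν.prod ν) := by
  rw [integral_div, mul_comm, ← div_div]
  gcongr
  exact one_div_add_one_le_integral_one_sub_chordSq_pow ν k

lemma FiniteFreeEnergy.one_le_selfEnergy (hν : FiniteFreeEnergy sphereMeasure logKernel ν) :
    1 ≤ selfEnergy logKernel ν := by
  refine le_integral_of_hasSum
    (q := fun k p => (1 - chordSq p.1 p.2) ^ (k + 1) / ((k : ℕ) + 1 : ℝ))
    (fun k => (integrable_one_sub_chordSq_pow (k + 1)).div_const _) hν.integrable_kernel ?_ ?_ ?_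
    hasSum_one_div_mul
  · exact ae_of_all _ fun p k =>
      div_nonneg (pow_nonneg (sub_nonneg.2 (chordSq_le_one _ _)) _) (by positivity)
  · filter_upwards [hν.ae_fst_ne_snd] with p hp
    have hd := chordSq_pos hp
    have h := hasSum_pow_div_log_of_abs_lt_one (x := 1 - chordSq p.1 p.2)
      (abs_lt.2 ⟨by linarith [chordSq_le_one p.1 p.2], by linarith⟩)
    rwa [sub_sub_cancel] at h
  · intro k
    convert! one_div_mul_le_integral_one_sub_chordSq_pow_div (ν := ν) (k + 1)
      (a := k + 1) (by positivity) using 3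
    push_cast
    ring

lemma FiniteFreeEnergy.integral_chordSq_mul_logKernel_le
    (hν : FiniteFreeEnergy sphereMeasure logKernel ν) :
    ∫ p, chordSq p.1 p.2 * logKernel p.1 p.2 ∂(ν.prod ν) ≤ 1 / 4 + ‖barycenter ν‖ ^ 2 / 2 := by
  have hint := (integrable_one_sub_chordSq_pow (ν := ν) 1)
  simp only [pow_one] at hint
  have hmoments : 1 / 4
      ≤ ∫ p, (1 - chordSq p.1 p.2 - chordSq p.1 p.2 * logKernel p.1 p.2) ∂(ν.prod ν) := by
    refine le_integral_of_hasSum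
      (q := fun k p => (1 - chordSq p.1 p.2) ^ (k + 2) / (((k : ℕ) + 1) * (k + 2) : ℝ))
      (fun k => (integrable_one_sub_chordSq_pow (k + 2)).div_const _)
      (hint.sub hν.integrable_chordSq_mul_logKernel) ?_ ?_ ?_ hasSum_one_div_mul_mul
    · exact ae_of_all _ fun p k =>
        div_nonneg (pow_nonneg (sub_nonneg.2 (chordSq_le_one _ _)) _) (by positivity)
    · filter_upwards [hν.ae_fst_ne_snd] with p hp
      convert! hasSum_one_sub_pow_div_mul (chordSq_pos hp) (chordSq_le_one _ _) using 1
      rw [logKernel]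
      ring
    · intro k
      convert! one_div_mul_le_integral_one_sub_chordSq_pow_div (ν := ν) (k + 2)
        (a := (k + 1) * (k + 2)) (by positivity) using 3
      push_cast
      ring
  rw [integral_sub hint hν.integrable_chordSq_mul_logKernel, integral_one_sub_chordSq] at hmoments
  linarith

end ChordalMoments

/-! ### Centering by affine maps -/

section Centering

lemma map_symm_withDensity {X : Type*} [MeasurableSpace X] (μ : Measure X) (e : X ≃ᵐ X)
    (φ : X → ℝ≥0∞) :
    (μ.withDensity φ).map e.symm = (μ.map e.symm).withDensity fun x => φ (e x) := by
  ext s hs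
  rw [Measure.map_apply e.symm.measurable hs, withDensity_apply _ hs,
    withDensity_apply _ (e.symm.measurable hs), e.symm.restrict_map, lintegral_map_equiv]
  simp

lemma sq_mul_mu2_smul_add {r : ℝ} (hr : r ≠ 0) (v x : E2) :
    r ^ 2 * mu2 (r • x + v)
      = mu2 x * exp (2 * log r - 2 * (logWeight (r • x + v) - logWeight x)) := by
  have hr2 : exp (2 * log r) = r ^ 2 := by
    rw [← exp_log (sq_pos_of_ne_zero hr), log_pow, Nat.cast_ofNat]
  rw [← hr2, ← exp_log (mu2_pos (r • x + v)), ← exp_log (mu2_pos x), ← exp_add, ← exp_add,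
    log_mu2, log_mu2]
  ring_nf

/-- The affine map `x ↦ r x + v`. In stereographic coordinates it is a conformal map of the
sphere. -/
def affineEquiv {r : ℝ} (hr : r ≠ 0) (v : E2) : E2 ≃ᵐ E2 :=
  ((Homeomorph.smulOfNeZero r hr).trans (Homeomorph.addRight v)).toMeasurableEquiv

variable {r : ℝ} (hr : r ≠ 0) (v : E2)

lemma affineEquiv_apply (x : E2) : affineEquiv hr v x = r • x + v := rfl

lemma map_affineEquiv_symm_volume :
    (volume : Measure E2).map (affineEquiv hr v).symm = ENNReal.ofReal (r ^ 2) • volume := by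
  have hsymm : ((affineEquiv hr v).symm : E2 → E2) = (r⁻¹ • ·) ∘ (· + -v) := rfl
  rw [hsymm, ← Measure.map_map (by fun_prop) (by fun_prop), map_add_right_eq_self,
    Measure.map_addHaar_smul _ (inv_ne_zero hr), finrank_euclideanSpace_fin, inv_pow, inv_inv,
    abs_sq]

lemma isConformal_affineEquiv : IsConformal sphereMeasure logKernel (affineEquiv hr v)
    fun x => 2 * log r - 2 * (logWeight (r • x + v) - logWeight x) where
  measurable := by
    have := continuous_logWeight (F := E2)
    fun_prop
  exists_abs_le := by
    obtain ⟨B, hB⟩ := exists_abs_logWeight_smul_add_sub_le hr v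
    refine ⟨|2 * log r| + 2 * B, fun x => (abs_sub _ _).trans ?_⟩
    rw [abs_mul 2 (_ - _), abs_two]
    gcongr
    exact hB x
  map_symm := by
    have hW := continuous_logWeight (F := E2)
    rw [sphereMeasure, map_symm_withDensity, map_affineEquiv_symm_volume,
      withDensity_smul_measure, ← withDensity_smul' _ _ ENNReal.ofReal_ne_top,
      ← withDensity_mul _ (continuous_mu2.measurable.ennreal_ofReal) (by fun_prop)]
    congr 1
    ext x
    rw [Pi.smul_apply, Pi.mul_apply, smul_eq_mul, ← ENNReal.ofReal_mul (sq_nonneg r),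
      ← ENNReal.ofReal_mul (mu2_pos x).le, affineEquiv_apply, sq_mul_mu2_smul_add hr]
  kernel_apply := by
    filter_upwards [ae_fst_ne_snd sphereMeasure sphereMeasure] with p hp
    rw [affineEquiv_apply, affineEquiv_apply, logKernel_smul_add hr v hp]
    ring

end Centering

section Centered

variable {ν : Measure E2} {t δ : ℝ}

lemma integrable_logWeight_smul_add_sub [IsFiniteMeasure ν] {r : ℝ} (hr : r ≠ 0) (v : E2) :
    Integrable (fun x => logWeight (r • x + v) - logWeight x) ν := by
  obtain ⟨B, hB⟩ := exists_abs_logWeight_smul_add_sub_le hr v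
  have hW := continuous_logWeight (F := E2)
  exact integrable_of_abs_le (by fun_prop) hB

lemma integral_logWeight_smul_add_sub_le [IsProbabilityMeasure ν] {r : ℝ} (hr : r ≠ 0) (v : E2) :
    ∫ x, (logWeight (r • x + v) - logWeight x) ∂ν
      ≤ (r ^ 2 - 1) / 2 * (1 + (barycenter ν).snd) + r * ⟪v, (barycenter ν).fst⟫ + ‖v‖ ^ 2 := by
  let L : WithLp 2 (E2 × ℝ) →L[ℝ] ℝ := ((r ^ 2 - 1) / 2) • WithLp.sndL 2 ℝ E2 ℝ
    + r • (innerSL ℝ v).comp (WithLp.fstL 2 ℝ E2 ℝ)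
  have hL (y : WithLp 2 (E2 × ℝ)) : (r ^ 2 - 1) / 2 * (1 + y.snd) + r * ⟪v, y.fst⟫ + ‖v‖ ^ 2
      = L y + ((r ^ 2 - 1) / 2 + ‖v‖ ^ 2) := by
    simp only [L, add_apply, smul_apply, ContinuousLinearMap.comp_apply, WithLp.sndL_apply,
      WithLp.fstL_apply, innerSL_apply_apply, smul_eq_mul]
    ring
  have hint := L.integrable_comp (integrable_stereo (ν := ν))
  calc ∫ x, (logWeight (r • x + v) - logWeight x) ∂ν
      ≤ ∫ x, (L (stereo x) + ((r ^ 2 - 1) / 2 + ‖v‖ ^ 2)) ∂ν :=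
        integral_mono (integrable_logWeight_smul_add_sub hr v) (hint.add (integrable_const _))
          fun x => (logWeight_smul_add_sub_le r v x).trans_eq (hL _)
    _ = L (barycenter ν) + ((r ^ 2 - 1) / 2 + ‖v‖ ^ 2) := by
        rw [integral_add hint (integrable_const _), L.integral_comp_comm integrable_stereo,
          ← barycenter, integral_const, probReal_univ, one_smul]
    _ = _ := (hL _).symm

lemma IsAlmostMinimizer.log_le (ht : t < 1)
    (hν : IsAlmostMinimizer sphereMeasure logKernel t ((1 - t) * δ) ν) {r : ℝ} (hr : r ≠ 0)
    (v : E2) :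
    log r ≤ (r ^ 2 - 1) / 2 * (1 + (barycenter ν).snd) + r * ⟪v, (barycenter ν).fst⟫ + ‖v‖ ^ 2
      + δ / 2 := by
  have := hν.isProbabilityMeasure
  have hconformal := hν.integral_le_of_isConformal (isConformal_affineEquiv hr v) ht
  rw [integral_sub (integrable_const _) ((integrable_logWeight_smul_add_sub hr v).const_mul 2),
    integral_const, probReal_univ, one_smul, integral_const_mul] at hconformal
  linarith [integral_logWeight_smul_add_sub_le (ν := ν) hr v]

lemma IsAlmostMinimizer.norm_barycenter_sq_le (ht : t < 1)
    (hν : IsAlmostMinimizer sphereMeasure logKernel t ((1 - t) * δ) ν) :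
    ‖barycenter ν‖ ^ 2 ≤ 10 * δ := by
  have := hν.isProbabilityMeasure
  set c := barycenter ν
  have hc : ‖c‖ ^ 2 = ‖c.fst‖ ^ 2 + c.snd ^ 2 := by
    rw [WithLp.prod_norm_sq_eq_of_L2, norm_eq_abs, sq_abs]
  have hsnd : |c.snd| ≤ 1 := abs_le_one_iff_mul_self_le_one.2 (by
    nlinarith [norm_barycenter_le_one (ν := ν), sq_nonneg ‖c.fst‖, norm_nonneg c])
  have hfst_sq : ‖c.fst‖ ^ 2 ≤ 2 * δ := by
    have h := hν.log_le ht one_ne_zero (-(1 / 2 : ℝ) • c.fst)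
    rw [inner_smul_left, real_inner_self_eq_norm_sq, norm_smul, mul_pow, norm_eq_abs, sq_abs,
      conj_trivial, log_one] at h
    linarith
  have hsnd_sq : c.snd ^ 2 ≤ 8 * δ := by
    have hu := (abs_le.1 hsnd).2
    have hs : 0 < 1 - c.snd / 4 := by linarith
    have h := hν.log_le ht (sqrt_pos.2 hs).ne' 0
    rw [sq_sqrt hs.le, log_sqrt hs.le] at h
    have hlog := one_sub_inv_le_log_of_pos hs
    simp only [inner_zero_left, mul_zero, norm_zero, zero_pow two_ne_zero, add_zero] at h
    have hinv : (1 - c.snd / 4)⁻¹ ≤ 1 + c.snd / 4 + 2 * (c.snd / 4) ^ 2 := by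
      rw [inv_le_iff_one_le_mul₀ hs]
      nlinarith [mul_nonneg (sq_nonneg c.snd) hs.le, sq_nonneg c.snd]
    linarith
  linarith

end Centered

/-! ### The free energy is bounded below at subcritical coupling -/

section LowerBound

variable {t : ℝ}

lemma rpow_neg_two_mul_div_rpow_neg_le {a b u : ℝ} (ht0 : 0 ≤ t) (ht : t ≤ 1) (ha : 0 < a)
    (hb : 0 < b) (hu : 0 < u) (hab : b ≤ 2 * (a + u)) :
    a ^ (-2 : ℝ) * (u / (a * b)) ^ (-t) ≤ 2 * (a ^ (t - 2) + u ^ (-t) * a ^ (2 * t - 2)) := by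
  have hbt : b ^ t ≤ 2 * (a ^ t + u ^ t) := calc
    b ^ t ≤ (2 * (a + u)) ^ t := by gcongr
    _ = 2 ^ t * (a + u) ^ t := mul_rpow zero_le_two (by positivity)
    _ ≤ 2 ^ (1 : ℝ) * (a ^ t + u ^ t) := by
        gcongr
        · exact one_le_two
        · exact rpow_add_le_add_rpow ha.le hu.le ht0 ht
    _ = 2 * (a ^ t + u ^ t) := by rw [rpow_one]
  calc a ^ (-2 : ℝ) * (u / (a * b)) ^ (-t) = u ^ (-t) * a ^ (t - 2) * b ^ t := by
        rw [div_rpow hu.le (by positivity), rpow_neg (x := a * b) (by positivity), div_inv_eq_mul,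
          mul_rpow ha.le hb.le, sub_eq_add_neg, rpow_add ha]
        ring
    _ ≤ u ^ (-t) * a ^ (t - 2) * (2 * (a ^ t + u ^ t)) := by gcongr
    _ = 2 * ((u ^ (-t) * u ^ t) * a ^ (t - 2) + u ^ (-t) * (a ^ (t - 2) * a ^ t)) := by ring
    _ = 2 * (a ^ (t - 2) + u ^ (-t) * a ^ (2 * t - 2)) := by
        rw [← rpow_add hu, ← rpow_add ha, neg_add_cancel, rpow_zero, one_mul]
        ring_nf

lemma rpow_neg_mul_rpow_le_of_one_le {a u : ℝ} (ht0 : 0 ≤ t) (ht : t ≤ 1) (ha : 0 < a)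
    (hu : 1 ≤ u) : u ^ (-t) * a ^ (2 * t - 2) ≤ 4 * (1 + u) ^ (t - 2) + a ^ (t - 2) := by
  have hu0 : 0 < u := by linarith
  rcases le_total u a with h | h
  · have hscale : u ^ (t - 2) ≤ 4 * (1 + u) ^ (t - 2) := calc
      u ^ (t - 2) = 2 ^ (2 - t) * (2 * u) ^ (t - 2) := by
          rw [mul_rpow zero_le_two hu0.le, ← mul_assoc, ← rpow_add zero_lt_two]
          simp
      _ ≤ 2 ^ (2 : ℝ) * (1 + u) ^ (t - 2) := by
          gcongr ?_ * ?_
          · exact rpow_le_rpow_of_exponent_le one_le_two (by linarith)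
          · exact rpow_le_rpow_of_nonpos (by linarith) (by linarith) (by linarith)
      _ = 4 * (1 + u) ^ (t - 2) := by norm_num
    calc u ^ (-t) * a ^ (2 * t - 2) ≤ u ^ (-t) * u ^ (2 * t - 2) := by
          gcongr ?_ * ?_
          exact rpow_le_rpow_of_nonpos hu0 h (by linarith)
      _ = u ^ (t - 2) := by rw [← rpow_add hu0]; ring_nf
      _ ≤ 4 * (1 + u) ^ (t - 2) + a ^ (t - 2) := by linarith [rpow_nonneg ha.le (t - 2)]
  · calc u ^ (-t) * a ^ (2 * t - 2) ≤ a ^ (-t) * a ^ (2 * t - 2) := by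
          gcongr ?_ * ?_
          exact rpow_le_rpow_of_nonpos ha h (by linarith)
      _ = a ^ (t - 2) := by rw [← rpow_add ha]; ring_nf
      _ ≤ 4 * (1 + u) ^ (t - 2) + a ^ (t - 2) := by
          linarith [rpow_nonneg (by linarith : 0 ≤ 1 + u) (t - 2)]

lemma integrable_indicator_ball_norm_sq_rpow_neg (ht : t < 1) :
    Integrable ((Metric.ball 0 1).indicator fun z : E2 => (‖z‖ ^ 2) ^ (-t)) := by
  rw [integrable_indicator_iff measurableSet_ball]
  refine integrableOn_ball_of_norm_le_rpow (C := 1) (α := 2 * t) (by simp) (by simp; linarith)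
    (ae_of_all _ fun z => ?_) (by fun_prop : Measurable _).aestronglyMeasurable
  rw [norm_of_nonneg (by positivity), one_mul, ← rpow_natCast_mul (norm_nonneg z)]
  push_cast
  rw [mul_neg]

lemma rpow_neg_mul_rpow_one_add_norm_sq_le (ht0 : 0 ≤ t) (ht : t ≤ 1) (x : E2) {z : E2}
    (hz : z ≠ 0) :
    (‖z‖ ^ 2) ^ (-t) * (1 + ‖x‖ ^ 2) ^ (2 * t - 2)
      ≤ (Metric.ball 0 1).indicator (fun z : E2 => (‖z‖ ^ 2) ^ (-t)) z
        + 4 * (1 + ‖z‖ ^ 2) ^ (t - 2) + (1 + ‖x‖ ^ 2) ^ (t - 2) := by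
  have ha : 1 ≤ 1 + ‖x‖ ^ 2 := le_add_of_nonneg_right (sq_nonneg _)
  by_cases hmem : z ∈ Metric.ball 0 1
  · rw [Set.indicator_of_mem hmem, add_assoc]
    refine (mul_le_of_le_one_right (by positivity) ?_).trans
      (le_add_of_nonneg_right (by positivity))
    exact rpow_le_one_of_one_le_of_nonpos ha (by linarith)
  · rw [Set.indicator_of_notMem hmem, zero_add]
    rw [mem_ball_zero_iff, not_lt] at hmem
    exact rpow_neg_mul_rpow_le_of_one_le ht0 ht (by linarith) (one_le_pow₀ hmem)

lemma mu2_mul_exp_logKernel_le (ht0 : 0 ≤ t) (ht : t ≤ 1) {x y : E2} (h : x ≠ y) :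
    mu2 x * exp (t * logKernel x y)
      ≤ 2 * ((Metric.ball 0 1).indicator (fun z : E2 => (‖z‖ ^ 2) ^ (-t)) (x - y)
        + 4 * (1 + ‖x - y‖ ^ 2) ^ (t - 2)) + 4 * (1 + ‖x‖ ^ 2) ^ (t - 2) := by
  have hz : x - y ≠ 0 := sub_ne_zero.2 h
  have hexp : exp (t * logKernel x y) = chordSq x y ^ (-t) := by
    rw [rpow_def_of_pos (chordSq_pos h), logKernel]
    ring_nf
  have hmu : mu2 x ≤ (1 + ‖x‖ ^ 2) ^ (-2 : ℝ) := by
    rw [mu2, rpow_neg (by positivity), rpow_two, one_div]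
    gcongr
    exact le_mul_of_one_le_left (by positivity) (by linarith [pi_gt_three])
  have hy : 1 + ‖y‖ ^ 2 ≤ 2 * (1 + ‖x‖ ^ 2 + ‖x - y‖ ^ 2) := by
    have := parallelogram_law_with_norm ℝ x (x - y)
    rw [sub_sub_cancel] at this
    nlinarith [sq_nonneg ‖x + (x - y)‖]
  calc mu2 x * exp (t * logKernel x y)
      ≤ (1 + ‖x‖ ^ 2) ^ (-2 : ℝ)
          * (‖x - y‖ ^ 2 / ((1 + ‖x‖ ^ 2) * (1 + ‖y‖ ^ 2))) ^ (-t) := by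
        rw [hexp, chordSq]
        gcongr
    _ ≤ 2 * ((1 + ‖x‖ ^ 2) ^ (t - 2) + (‖x - y‖ ^ 2) ^ (-t) * (1 + ‖x‖ ^ 2) ^ (2 * t - 2)) :=
        rpow_neg_two_mul_div_rpow_neg_le ht0 ht (by positivity) (by positivity) (by positivity) hy
    _ ≤ _ := by linarith [rpow_neg_mul_rpow_one_add_norm_sq_le ht0 ht x hz]

lemma exists_integral_exp_mul_logKernel_le (ht0 : 0 ≤ t) (ht : t < 1) :
    ∃ C, ∀ y : E2, Integrable (fun x => exp (t * logKernel x y)) sphereMeasure ∧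
      ∫ x, exp (t * logKernel x y) ∂sphereMeasure ≤ C := by
  set φ : E2 → ℝ := fun z => 2 * ((Metric.ball 0 1).indicator (fun z => (‖z‖ ^ 2) ^ (-t)) z
    + 4 * (1 + ‖z‖ ^ 2) ^ (t - 2))
  set ψ : E2 → ℝ := fun x => 4 * (1 + ‖x‖ ^ 2) ^ (t - 2)
  have hψ : Integrable ψ := (integrable_rpow_one_add_norm_sq (by linarith)).const_mul 4
  have hφ : Integrable φ :=
    ((integrable_indicator_ball_norm_sq_rpow_neg ht).add hψ).const_mul 2
  refine ⟨(∫ z, φ z) + ∫ x, ψ x, fun y => ?_⟩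
  have hmeas : Measurable fun x => mu2 x * exp (t * logKernel x y) := by
    have := continuous_mu2.measurable
    have := (continuous_chordSq (F := E2)).measurable
    unfold logKernel
    fun_prop
  have hle : ∀ᵐ x : E2, mu2 x * exp (t * logKernel x y) ≤ φ (x - y) + ψ x := by
    filter_upwards [Measure.ae_ne volume y] with x hx using mu2_mul_exp_logKernel_le ht0 ht.le hx
  have hbound := (hφ.comp_sub_right y).add hψ
  have hint : Integrable fun x => mu2 x * exp (t * logKernel x y) :=
    hbound.mono' hmeas.aestronglyMeasurable (hle.mono fun x hx => by
      rwa [norm_of_nonneg (mul_nonneg (mu2_pos x).le (exp_pos _).le)])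
  have hmu2_nonneg := ae_of_all volume fun x : E2 => (mu2_pos x).le
  refine ⟨(integrable_withDensity_ofReal_iff continuous_mu2.measurable hmu2_nonneg).2 hint, ?_⟩
  rw [sphereMeasure, integral_withDensity_ofReal continuous_mu2.measurable hmu2_nonneg]
  calc ∫ x, mu2 x * exp (t * logKernel x y) ≤ ∫ x, (φ (x - y) + ψ x) :=
        integral_mono_ae hint hbound hle
    _ = (∫ z, φ z) + ∫ x, ψ x := by
        rw [integral_add (hφ.comp_sub_right y) hψ, integral_sub_right_eq_self]

lemma exists_le_freeEnergy (ht0 : 0 ≤ t) (ht : t < 1) :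
    ∃ m, ∀ ν, FiniteFreeEnergy sphereMeasure logKernel ν →
      m ≤ freeEnergy sphereMeasure logKernel t ν := by
  obtain ⟨C, hC⟩ := exists_integral_exp_mul_logKernel_le ht0 ht
  refine ⟨-log C, fun ν hν => ?_⟩
  have h := mul_selfEnergy_le_toReal_klDiv_add_log hν (fun y => (hC y).1) fun y => (hC y).2
  rw [freeEnergy]
  linarith

end LowerBound

/-! ### The sharp inequality for probability measures -/

section Sharp

variable {ν : Measure E2} {t τ : ℝ}

lemma one_sub_two_mul_chordSq_sub_le_inner (c : WithLp 2 (E2 × ℝ)) (x y : E2) :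
    1 - 2 * chordSq x y - 2 * ‖c‖ ≤ ⟪stereo x - c, stereo y - c⟫ := by
  have hx := real_inner_le_norm (stereo x) c
  have hy := real_inner_le_norm c (stereo y)
  rw [norm_stereo, one_mul] at hx
  rw [norm_stereo, mul_one] at hy
  rw [inner_sub_left, inner_sub_right, inner_sub_right, inner_stereo, real_inner_self_eq_norm_sq]
  linarith [sq_nonneg ‖c‖]

lemma mul_selfEnergy_sub_le_integral_inner_mul_logKernel
    (hν : FiniteFreeEnergy sphereMeasure logKernel ν) :
    (1 - 2 * ‖barycenter ν‖) * selfEnergy logKernel ν - (1 / 2 + ‖barycenter ν‖ ^ 2)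
      ≤ ∫ p, ⟪stereo p.1 - barycenter ν, stereo p.2 - barycenter ν⟫ * logKernel p.1 p.2
          ∂(ν.prod ν) := by
  have := hν.isProbabilityMeasure
  set c := barycenter ν
  have hK := hν.integrable_kernel
  have hdK := hν.integrable_chordSq_mul_logKernel
  have hinner : Integrable
      (fun p : E2 × E2 => ⟪stereo p.1 - c, stereo p.2 - c⟫ * logKernel p.1 p.2) (ν.prod ν) := by
    have hcont : Continuous fun p : E2 × E2 => ⟪stereo p.1 - c, stereo p.2 - c⟫ := by
      have := continuous_stereo (F := E2)
      fun_prop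
    have hnorm (x : E2) : ‖stereo x - c‖ ≤ 2 := by
      linarith [norm_sub_le (stereo x) c, norm_stereo x, norm_barycenter_le_one (ν := ν)]
    refine hK.bdd_mul (c := 2 * 2) hcont.aestronglyMeasurable (ae_of_all _ fun p => ?_)
    exact (norm_inner_le_norm _ _).trans
      (mul_le_mul (hnorm _) (hnorm _) (norm_nonneg _) zero_le_two)
  calc (1 - 2 * ‖c‖) * selfEnergy logKernel ν - (1 / 2 + ‖c‖ ^ 2)
      ≤ (1 - 2 * ‖c‖) * selfEnergy logKernel ν
          - 2 * ∫ p, chordSq p.1 p.2 * logKernel p.1 p.2 ∂(ν.prod ν) := by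
        linarith [hν.integral_chordSq_mul_logKernel_le]
    _ = ∫ p, ((1 - 2 * ‖c‖) * logKernel p.1 p.2 - 2 * (chordSq p.1 p.2 * logKernel p.1 p.2))
          ∂(ν.prod ν) := by
        rw [integral_sub (hK.const_mul _) (hdK.const_mul _), integral_const_mul,
          integral_const_mul, selfEnergy]
    _ ≤ _ := by
        refine integral_mono ((hK.const_mul _).sub (hdK.const_mul _)) hinner fun p => ?_
        linarith [mul_le_mul_of_nonneg_right
          (one_sub_two_mul_chordSq_sub_le_inner c p.1 p.2) (logKernel_nonneg p.1 p.2)]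

lemma IsAlmostMinimizer.mul_selfEnergy_le (ht0 : 0 ≤ t) (ht : t < 1) (hτ0 : 0 < τ)
    (hτ : τ ≤ 1 / 4) (hν : IsAlmostMinimizer sphereMeasure logKernel t ((1 - t) * τ ^ 4) ν) :
    (1 - 8 * τ ^ 2) * (2 * t * selfEnergy logKernel ν) ≤ 1 + t + 28 * τ ^ 2 := by
  have := hν.isProbabilityMeasure
  have hvar := hν.sq_mul_integral_inner_mul_kernel_le continuous_stereo.stronglyMeasurable
    (fun x => (norm_stereo x).le) (by rwa [abs_of_pos hτ0])
  have hdim : Module.finrank ℝ (WithLp 2 (E2 × ℝ)) = 3 := by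
    simp [LinearEquiv.finrank_eq (WithLp.linearEquiv 2 ℝ (E2 × ℝ))]
  have hpair := mul_selfEnergy_sub_le_integral_inner_mul_logKernel hν.toFiniteFreeEnergy
  have hI : 0 ≤ 2 * t * selfEnergy logKernel ν :=
    mul_nonneg (by positivity) (zero_le_one.trans hν.one_le_selfEnergy)
  rw [← barycenter, hdim] at hvar
  have hτ_sq : τ ^ 2 ≤ 1 / 16 := by nlinarith
  have hcenter_sq : ‖barycenter ν‖ ^ 2 ≤ 10 * τ ^ 4 := hν.norm_barycenter_sq_le ht
  have hcenter : ‖barycenter ν‖ ≤ 4 * τ ^ 2 :=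
    abs_le_of_sq_le_sq' (by linarith [pow_nonneg hτ0.le 4]) (by positivity) |>.2
  set J := ∫ p, ⟪stereo p.1 - barycenter ν, stereo p.2 - barycenter ν⟫ * logKernel p.1 p.2
    ∂(ν.prod ν)
  have hJ : 2 * t * J ≤ 1 + 26 * τ ^ 2 := by
    refine le_of_mul_le_mul_left ?_ (pow_pos hτ0 2)
    push_cast at hvar
    linarith [mul_nonneg ht0 (pow_nonneg hτ0.le 4)]
  calc (1 - 8 * τ ^ 2) * (2 * t * selfEnergy logKernel ν)
      ≤ (1 - 2 * ‖barycenter ν‖) * (2 * t * selfEnergy logKernel ν) :=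
        mul_le_mul_of_nonneg_right (by linarith) hI
    _ ≤ 2 * t * J + t + 2 * t * ‖barycenter ν‖ ^ 2 := by
        linarith [mul_le_mul_of_nonneg_left hpair (mul_nonneg zero_le_two ht0)]
    _ ≤ 1 + 26 * τ ^ 2 + t + 2 * 1 * (10 * τ ^ 4) := by gcongr
    _ ≤ 1 + t + 28 * τ ^ 2 := by
        linarith [sq_nonneg τ, mul_le_mul_of_nonneg_left hτ_sq (sq_nonneg τ)]

lemma neg_le_freeEnergy (ht0 : 0 ≤ t) (ht : t < 1)
    (hν : FiniteFreeEnergy sphereMeasure logKernel ν) :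
    -((1 + t) / 2) ≤ freeEnergy sphereMeasure logKernel t ν := by
  obtain ⟨m, hm⟩ := exists_le_freeEnergy ht0 ht
  set F := freeEnergy sphereMeasure logKernel t ν
  have hτ_le : ∀ τ ∈ Set.Ioc (0 : ℝ) (1 / 4),
      -(2 * (F + τ ^ 4)) * (1 - 8 * τ ^ 2) ≤ 1 + t + 28 * τ ^ 2 := by
    intro τ ⟨hτ0, hτ⟩
    have hε : (1 - t) * τ ^ 4 ≤ τ ^ 4 := by linarith [mul_nonneg ht0 (pow_nonneg hτ0.le 4)]
    obtain ⟨ν', hν'⟩ := exists_isAlmostMinimizer ⟨ν, hν⟩ hm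
      (mul_pos (sub_pos.2 ht) (pow_pos hτ0 4))
    have hle : (klDiv ν' sphereMeasure).toReal - t * selfEnergy logKernel ν'
        ≤ F + (1 - t) * τ ^ 4 := hν'.freeEnergy_le ν hν
    have hkl : 0 ≤ (klDiv ν' sphereMeasure).toReal := ENNReal.toReal_nonneg
    have hfactor : 0 ≤ 1 - 8 * τ ^ 2 := by nlinarith
    linarith [hν'.mul_selfEnergy_le ht0 ht hτ0 hτ, mul_le_mul_of_nonneg_left
      (by linarith : -(2 * (F + τ ^ 4)) ≤ 2 * t * selfEnergy logKernel ν') hfactor]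
  have hlim : -(2 * (F + 0 ^ 4)) * (1 - 8 * 0 ^ 2) ≤ 1 + t + 28 * 0 ^ 2 :=
    ContinuousWithinAt.closure_le (s := Set.Ioc 0 (1 / 4)) (by simp [closure_Ioc])
      (f := fun τ : ℝ => -(2 * (F + τ ^ 4)) * (1 - 8 * τ ^ 2))
      (g := fun τ : ℝ => 1 + t + 28 * τ ^ 2)
      (by fun_prop) (by fun_prop) hτ_le
  linarith

/-- The sharp logarithmic Hardy–Littlewood–Sobolev inequality of Carlen–Loss and Beckner. -/
lemma FiniteFreeEnergy.selfEnergy_sub_one_le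
    (hν : FiniteFreeEnergy sphereMeasure logKernel ν) :
    selfEnergy logKernel ν - 1 ≤ (klDiv ν sphereMeasure).toReal := by
  set I := selfEnergy logKernel ν
  set H := (klDiv ν sphereMeasure).toReal
  have hlim : -((1 + 1) / 2) ≤ H - 1 * I :=
    ContinuousWithinAt.closure_le (s := Set.Ico 0 1) (by simp [closure_Ico])
      (f := fun t : ℝ => -((1 + t) / 2)) (g := fun t => H - t * I)
      (by fun_prop) (by fun_prop) fun t ht => neg_le_freeEnergy ht.1 ht.2 hν
  linarith

end Sharp

/-! ### From probability measures to densities on the plane -/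

section PlaneDensity

lemma logKernel_eq_Vpot {x y : E2} (h : x ≠ y) :
    logKernel x y = (Vpot x + Vpot y) / 2 - log π - 2 * log ‖x - y‖ := by
  rw [logKernel_eq h, logWeight, logWeight, Vpot, Vpot]
  ring

variable {ρ : E2 → ℝ}

lemma integrable_mul_log_of_admissible (hρ : Admissible ρ) :
    Integrable fun x => ρ x * log (ρ x) :=
  (integrable_mul_abs_iff hρ.1 (by have := hρ.1; fun_prop) hρ.2.1).1 hρ.2.2.2.1

lemma admissible_div_const (hρ : Admissible ρ) {M : ℝ} (hM : 0 < M) :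
    Admissible fun x => ρ x / M := by
  have hent := integrable_mul_log_of_admissible hρ
  obtain ⟨hmeas, hnonneg, hint, -, hV, hE⟩ := hρ
  have hmeas' : Measurable fun x => ρ x / M := hmeas.div_const M
  have hnonneg' : ∀ᵐ x, 0 ≤ ρ x / M := hnonneg.mono fun x hx => div_nonneg hx hM.le
  refine ⟨hmeas', hnonneg', hint.div_const M, ?_, ?_, ?_⟩
  · rw [integrable_mul_abs_iff hmeas' (by fun_prop) hnonneg']
    refine ((hent.div_const M).sub (hint.const_mul (log M / M))).congr (ae_of_all _ fun x => ?_)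
    rcases eq_or_ne (ρ x) 0 with h | h
    · simp [h]
    · simp only [Pi.sub_apply, log_div h hM.ne']
      ring
  · simpa only [mul_div_assoc] using hV.div_const M
  · refine (hE.div_const (M ^ 2)).congr (ae_of_all _ fun p => ?_)
    field_simp

lemma integrable_mul_mul_log_norm_sub_of_admissible (hρ : Admissible ρ) :
    Integrable fun p : E2 × E2 => ρ p.1 * ρ p.2 * log ‖p.1 - p.2‖ := by
  have := hρ.1
  exact (integrable_mul_abs_iff (by fun_prop) (by fun_prop) (ae_prod_nonneg hρ.2.1)).1
    hρ.2.2.2.2.2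

lemma mul_mul_logKernel_ae_eq (ρ : E2 → ℝ) :
    (fun p : E2 × E2 => ρ p.1 * ρ p.2 * logKernel p.1 p.2) =ᵐ[volume] fun p =>
      (Vpot p.1 * ρ p.1 * ρ p.2 + ρ p.1 * (Vpot p.2 * ρ p.2)) / 2
        - (log π * (ρ p.1 * ρ p.2) + 2 * (ρ p.1 * ρ p.2 * log ‖p.1 - p.2‖)) := by
  filter_upwards [ae_fst_ne_snd volume volume] with p hp
  rw [logKernel_eq_Vpot hp]
  ring

lemma integrable_mul_mul_logKernel (hρ : Admissible ρ) :
    Integrable fun p : E2 × E2 => ρ p.1 * ρ p.2 * logKernel p.1 p.2 := by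
  have hE := (integrable_mul_mul_log_norm_sub_of_admissible hρ).const_mul 2
  obtain ⟨-, -, hint, -, hV, -⟩ := hρ
  exact ((((hV.mul_prod hint).add (hint.mul_prod hV)).div_const 2).sub
    (((hint.mul_prod hint).const_mul (log π)).add hE)).congr (mul_mul_logKernel_ae_eq ρ).symm

lemma withDensity_absolutelyContinuous_sphereMeasure (ρ : E2 → ℝ) :
    (volume.withDensity fun x => ENNReal.ofReal (ρ x)) ≪ sphereMeasure :=
  (withDensity_absolutelyContinuous _ _).trans <|
    withDensity_absolutelyContinuous' continuous_mu2.measurable.ennreal_ofReal.aemeasurable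
      (ae_of_all _ fun x => (ENNReal.ofReal_pos.2 (mu2_pos x)).ne')

lemma mul_llr_sphereMeasure_ae_eq (hρ : Admissible ρ) :
    (fun x => ρ x * llr (volume.withDensity fun x => ENNReal.ofReal (ρ x)) sphereMeasure x)
      =ᵐ[volume] fun x => ρ x * log (ρ x) + Vpot x * ρ x := by
  refine (mul_llr_withDensity_ofReal hρ.1 hρ.2.1 continuous_mu2.measurable mu2_pos).trans
    (ae_of_all _ fun x => ?_)
  simp only [log_mu2, logWeight, Vpot]
  ring

lemma finiteFreeEnergy_withDensity (hρ : Admissible ρ) (hρ1 : ∫ x, ρ x = 1) :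
    FiniteFreeEnergy sphereMeasure logKernel
      (volume.withDensity fun x => ENNReal.ofReal (ρ x)) where
  isProbabilityMeasure := isProbabilityMeasure_withDensity_ofReal hρ.2.2.1 hρ.2.1 hρ1
  klDiv_ne_top := klDiv_ne_top (withDensity_absolutelyContinuous_sphereMeasure ρ) <|
    (integrable_withDensity_ofReal_iff hρ.1 hρ.2.1).2 <|
      ((integrable_mul_log_of_admissible hρ).add hρ.2.2.2.2.1).congr
        (mul_llr_sphereMeasure_ae_eq hρ).symm
  integrable_kernel := (integrable_prod_withDensity_ofReal_iff hρ.1 hρ.2.1).2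
    (integrable_mul_mul_logKernel hρ)

lemma toReal_klDiv_withDensity_sphereMeasure (hρ : Admissible ρ) (hρ1 : ∫ x, ρ x = 1) :
    (klDiv (volume.withDensity fun x => ENNReal.ofReal (ρ x)) sphereMeasure).toReal
      = (∫ x, ρ x * log (ρ x)) + ∫ x, Vpot x * ρ x := by
  have := isProbabilityMeasure_withDensity_ofReal hρ.2.2.1 hρ.2.1 hρ1
  rw [toReal_klDiv_eq_integral_llr (withDensity_absolutelyContinuous_sphereMeasure ρ),
    integral_withDensity_ofReal hρ.1 hρ.2.1, integral_congr_ae (mul_llr_sphereMeasure_ae_eq hρ),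
    integral_add (integrable_mul_log_of_admissible hρ) hρ.2.2.2.2.1]

lemma selfEnergy_logKernel_withDensity (hρ : Admissible ρ) (hρ1 : ∫ x, ρ x = 1) :
    selfEnergy logKernel (volume.withDensity fun x => ENNReal.ofReal (ρ x))
      = (∫ x, Vpot x * ρ x) - log π
        - 2 * ∫ p : E2 × E2, ρ p.1 * ρ p.2 * log ‖p.1 - p.2‖ := by
  have hE := (integrable_mul_mul_log_norm_sub_of_admissible hρ).const_mul 2
  obtain ⟨hmeas, hnonneg, hint, -, hV, -⟩ := hρ
  have hfst : Integrable fun p : E2 × E2 => Vpot p.1 * ρ p.1 * ρ p.2 := hV.mul_prod hint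
  have hsnd : Integrable fun p : E2 × E2 => ρ p.1 * (Vpot p.2 * ρ p.2) := hint.mul_prod hV
  have hpot := (hfst.fun_add hsnd).div_const 2
  have hmass : Integrable fun p : E2 × E2 => log π * (ρ p.1 * ρ p.2) :=
    (hint.mul_prod hint).const_mul _
  rw [selfEnergy_withDensity_ofReal hmeas hnonneg, ← Measure.volume_eq_prod,
    integral_congr_ae (mul_mul_logKernel_ae_eq ρ),
    integral_sub hpot (hmass.fun_add hE), integral_add hmass hE, integral_div,
    integral_add hfst hsnd, integral_const_mul, integral_const_mul, Measure.volume_eq_prod,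
    integral_prod_mul (fun x => Vpot x * ρ x) ρ, integral_prod_mul ρ fun x => Vpot x * ρ x,
    integral_prod_mul ρ ρ, hρ1]
  ring

lemma two_mul_integral_log_norm_sub_le {α : ℝ} (hα : 0 ≤ α) (hρ : Admissible ρ)
    (hρ1 : ∫ x, ρ x = 1) :
    2 * (α - 1) * ∫ p : E2 × E2, ρ p.1 * ρ p.2 * log ‖p.1 - p.2‖
      ≤ (∫ x, ρ x * log (ρ x)) + α * (∫ x, Vpot x * ρ x) + (1 - α) * (1 + log π) := by
  have hν := finiteFreeEnergy_withDensity hρ hρ1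
  have := hν.isProbabilityMeasure
  have hsharp := hν.selfEnergy_sub_one_le
  have hone := hν.one_le_selfEnergy
  rw [toReal_klDiv_withDensity_sphereMeasure hρ hρ1] at hsharp
  rw [selfEnergy_logKernel_withDensity hρ hρ1] at hsharp hone
  linarith [mul_nonneg hα (sub_nonneg.2 hone)]

end PlaneDensity

end LogHLS

open LogHLS

/-- Generalized logarithmic Hardy–Littlewood–Sobolev inequality. -/
theorem generalized_log_HLS (α : ℝ) (hα : 0 ≤ α) (f : E2 → ℝ) (hf : Admissible f)
    (M : ℝ) (hM : M = ∫ x, f x) (hM0 : 0 < M) :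
    (∫ x, f x * Real.log (f x / M)) + α * (∫ x, Vpot x * f x)
        + M * (1 - α) * (1 + Real.log π)
      ≥ (2 / M) * (α - 1) * ∫ p : E2 × E2, f p.1 * f p.2 * Real.log ‖p.1 - p.2‖ := by
  have hmass : ∫ x, f x / M = 1 := by rw [integral_div, ← hM, div_self hM0.ne']
  have hunit := two_mul_integral_log_norm_sub_le hα (admissible_div_const hf hM0) hmass
  have hentropy : ∫ x, f x / M * log (f x / M) = (∫ x, f x * log (f x / M)) / M := by
    rw [← integral_div]
    exact integral_congr_ae (ae_of_all _ fun x => by ring)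
  have hpotential : ∫ x, Vpot x * (f x / M) = (∫ x, Vpot x * f x) / M := by
    simp only [← mul_div_assoc, integral_div]
  have hinteraction : ∫ p : E2 × E2, f p.1 / M * (f p.2 / M) * log ‖p.1 - p.2‖
      = (∫ p : E2 × E2, f p.1 * f p.2 * log ‖p.1 - p.2‖) / M ^ 2 := by
    rw [← integral_div]
    exact integral_congr_ae (ae_of_all _ fun p => by ring)
  rw [hentropy, hpotential, hinteraction] at hunit
  have hscaled := mul_le_mul_of_nonneg_left hunit hM0.le
  field_simp at hscaled ⊢
  linarith
end
end

section
/- For every α ≥ 0 and every M > 0, the function f_⋆ = M μ realizes the equality case in the generalized logarithmic Hardy–Littlewood–Sobolev inequality: ∫_{ℝ²} f_⋆ log(f_⋆/M) dx + α ∫_{ℝ²} V f_⋆ dx + M(1−α)(1+log π) = (2/M)(α−1) ∬_{ℝ²×ℝ²} f_⋆(x) f_⋆(y) log|x−y| dx dy. -/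
open MeasureTheory Real Filter

noncomputable section

/-!
Let `σ` be the measure with density `μ`: under stereographic projection it is the uniform
probability measure on the Riemann sphere, so it is invariant under the rotation
`y ↦ (1 + conj x * y) / (y - x)` taking `x` to `∞`. Since
`1 + |(1 + conj x * y) / (y - x)|² = (1 + |x|²) (1 + |y|²) / |x - y|²`, we may write
`2 log |x - y|` as `log (1 + |x|²) + log (1 + |y|²) - log (1 + |w|²)`, where `x`, `y` and the image
`w` of `y` all have law `σ` when `(x, y)` has law `σ ⊗ σ`. Hence
`2 ∬ log |x - y| dσ dσ = ∫ log (1 + |x|²) dσ`, and this is `1` because `log (1 + |x|²)` is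
exponentially distributed with rate `1` under `σ`.
-/

open Set Module
open scoped ComplexConjugate ENNReal

section RadialSubstitution

lemma hasDerivAt_log_one_add_sq (r : ℝ) :
    HasDerivAt (fun r : ℝ => log (1 + r ^ 2)) (2 * r / (1 + r ^ 2)) r := by
  have h : HasDerivAt (fun r : ℝ => 1 + r ^ 2) (2 * r) r := by
    simpa using (hasDerivAt_pow 2 r).const_add 1
  exact h.log (by positivity)

lemma monotoneOn_log_one_add_sq : MonotoneOn (fun r : ℝ => log (1 + r ^ 2)) (Ioi 0) :=
  fun r (hr : 0 < r) s _ hrs => log_le_log (by positivity) (by gcongr)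

lemma image_log_one_add_sq_Ioi : (fun r : ℝ => log (1 + r ^ 2)) '' Ioi 0 = Ioi 0 := by
  ext t
  constructor
  · rintro ⟨r, hr : 0 < r, rfl⟩
    exact log_pos (lt_add_of_pos_right 1 (by positivity))
  · intro (ht : 0 < t)
    have h : 0 < exp t - 1 := sub_pos.2 (one_lt_exp_iff.2 ht)
    exact ⟨√(exp t - 1), sqrt_pos.2 h, by simp [sq_sqrt h.le]⟩

lemma deriv_log_one_add_sq_mul_exp_neg (r c : ℝ) :
    2 * r / (1 + r ^ 2) * (exp (-log (1 + r ^ 2)) * c) = 2 * r / (1 + r ^ 2) ^ 2 * c := by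
  rw [exp_neg, exp_log (by positivity)]
  field_simp

lemma integrableOn_radial_comp_log_iff {g : ℝ → ℝ} :
    IntegrableOn (fun r : ℝ => 2 * r / (1 + r ^ 2) ^ 2 * g (log (1 + r ^ 2))) (Ioi 0) ↔
      IntegrableOn (fun t => exp (-t) * g t) (Ioi 0) := by
  have h := integrableOn_image_iff_integrableOn_deriv_smul_of_monotoneOn measurableSet_Ioi
    (fun r _ => (hasDerivAt_log_one_add_sq r).hasDerivWithinAt) monotoneOn_log_one_add_sq
    (fun t => exp (-t) * g t)
  simp_rw [image_log_one_add_sq_Ioi, smul_eq_mul, deriv_log_one_add_sq_mul_exp_neg] at h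
  exact h.symm

lemma integral_radial_comp_log (g : ℝ → ℝ) :
    ∫ r in Ioi (0 : ℝ), 2 * r / (1 + r ^ 2) ^ 2 * g (log (1 + r ^ 2)) =
      ∫ t in Ioi (0 : ℝ), exp (-t) * g t := by
  have h := integral_image_eq_integral_deriv_smul_of_monotoneOn measurableSet_Ioi
    (fun r _ => (hasDerivAt_log_one_add_sq r).hasDerivWithinAt) monotoneOn_log_one_add_sq
    (fun t => exp (-t) * g t)
  simp_rw [image_log_one_add_sq_Ioi, smul_eq_mul, deriv_log_one_add_sq_mul_exp_neg] at h
  exact h.symm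

end RadialSubstitution

section StereographicMeasure

/-- The density, in a stereographic coordinate, of the uniform probability measure on the sphere
`S²`. It has this meaning when `E` is a plane. -/
def stereographicDensity {E : Type*} [NormedAddCommGroup E] (x : E) : ℝ :=
  1 / (π * (1 + ‖x‖ ^ 2) ^ 2)

/-- The image of the uniform probability measure on the sphere `S²` under stereographic projection
onto the plane `E`. -/
def stereographicMeasure (E : Type*) [NormedAddCommGroup E] [MeasureSpace E] : Measure E :=
  volume.withDensity fun x => ENNReal.ofReal (stereographicDensity x)

variable {E : Type*} [NormedAddCommGroup E]

lemma stereographicDensity_nonneg (x : E) : 0 ≤ stereographicDensity x := by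
  unfold stereographicDensity
  positivity

@[fun_prop]
lemma measurable_stereographicDensity [MeasurableSpace E] [OpensMeasurableSpace E] :
    Measurable (stereographicDensity : E → ℝ) := by
  unfold stereographicDensity
  fun_prop

instance nullSingletonClass_stereographicMeasure [MeasureSpace E]
    [NullSingletonClass (volume : Measure E)] : NullSingletonClass (stereographicMeasure E) :=
  nullSingletonClass_withDensity _

lemma integral_stereographicMeasure [MeasureSpace E] [OpensMeasurableSpace E] (g : E → ℝ) :
    ∫ x, g x ∂stereographicMeasure E = ∫ x, stereographicDensity x * g x := by
  rw [stereographicMeasure, integral_withDensity_eq_integral_toReal_smul (by fun_prop)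
    (ae_of_all _ fun _ => ENNReal.ofReal_lt_top)]
  simp only [ENNReal.toReal_ofReal (stereographicDensity_nonneg _), smul_eq_mul]

lemma integrable_stereographicMeasure_iff [MeasureSpace E] [OpensMeasurableSpace E] {g : E → ℝ} :
    Integrable g (stereographicMeasure E) ↔ Integrable fun x => stereographicDensity x * g x := by
  rw [stereographicMeasure, integrable_withDensity_iff_integrable_smul' (by fun_prop)
    (ae_of_all _ fun _ => ENNReal.ofReal_lt_top)]
  simp only [ENNReal.toReal_ofReal (stereographicDensity_nonneg _), smul_eq_mul]

lemma integral_stereographicMeasure_prod [MeasureSpace E] [OpensMeasurableSpace E]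
    [SFinite (volume : Measure E)] (g : E × E → ℝ) :
    ∫ p, g p ∂(stereographicMeasure E).prod (stereographicMeasure E) =
      ∫ p : E × E, stereographicDensity p.1 * stereographicDensity p.2 * g p := by
  rw [stereographicMeasure, prod_withDensity (by fun_prop) (by fun_prop),
    integral_withDensity_eq_integral_toReal_smul (by fun_prop)
    (ae_of_all _ fun _ => ENNReal.mul_lt_top ENNReal.ofReal_lt_top ENNReal.ofReal_lt_top)]
  simp only [ENNReal.toReal_mul, ENNReal.toReal_ofReal (stereographicDensity_nonneg _),
    smul_eq_mul, Measure.volume_eq_prod]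

end StereographicMeasure

section Plane

attribute [local instance] FiniteDimensional.of_fact_finrank_eq_two

variable {E F : Type*}
  [NormedAddCommGroup E] [InnerProductSpace ℝ E] [MeasurableSpace E] [BorelSpace E]
  [NormedAddCommGroup F] [InnerProductSpace ℝ F] [MeasurableSpace F] [BorelSpace F]

lemma measurePreserving_stereographicMeasure [FiniteDimensional ℝ E] [FiniteDimensional ℝ F]
    (e : E ≃ₗᵢ[ℝ] F) : MeasurePreserving e (stereographicMeasure E) (stereographicMeasure F) := by
  refine ⟨e.continuous.measurable, Measure.ext fun s hs => ?_⟩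
  rw [Measure.map_apply e.continuous.measurable hs, stereographicMeasure, stereographicMeasure,
    withDensity_apply _ hs, withDensity_apply _ (e.continuous.measurable hs),
    ← e.measurePreserving.setLIntegral_comp_preimage hs (by fun_prop)]
  simp only [stereographicDensity, e.norm_map]

variable [Fact (finrank ℝ E = 2)]

lemma volume_real_unitBall_of_finrank_eq_two : volume.real (Metric.ball (0 : E) 1) = π := by
  have := nontrivial_of_finrank_pos (R := ℝ) (M := E) (by simp [Fact.out (p := finrank ℝ E = 2)])
  rw [Measure.real, InnerProductSpace.volume_ball_of_dim_even (k := 1) Fact.out]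
  simp [pi_pos.le]

lemma integrable_comp_log_one_add_norm_sq_iff {g : ℝ → ℝ} :
    Integrable (fun x : E => g (log (1 + ‖x‖ ^ 2))) (stereographicMeasure E) ↔
      IntegrableOn (fun t => exp (-t) * g t) (Ioi 0) := by
  have hE := Fact.out (p := finrank ℝ E = 2)
  have := nontrivial_of_finrank_pos (R := ℝ) (M := E) (by simp [hE])
  have hpolar (r : ℝ) : r ^ (2 - 1) • (1 / (π * (1 + r ^ 2) ^ 2) * g (log (1 + r ^ 2))) =
      1 / (2 * π) * (2 * r / (1 + r ^ 2) ^ 2 * g (log (1 + r ^ 2))) := by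
    simp only [Nat.add_one_sub_one, pow_one, smul_eq_mul]
    field_simp
  rw [integrable_stereographicMeasure_iff, ← integrableOn_radial_comp_log_iff]
  refine (integrable_fun_norm_addHaar (volume : Measure E)
    (f := fun r => 1 / (π * (1 + r ^ 2) ^ 2) * g (log (1 + r ^ 2)))).trans ?_
  simp_rw [hE, hpolar]
  exact integrable_const_mul_iff (by simp [pi_ne_zero]) _

lemma integral_comp_log_one_add_norm_sq (g : ℝ → ℝ) :
    ∫ x : E, g (log (1 + ‖x‖ ^ 2)) ∂stereographicMeasure E =
      ∫ t in Ioi (0 : ℝ), exp (-t) * g t := by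
  have hE := Fact.out (p := finrank ℝ E = 2)
  have := nontrivial_of_finrank_pos (R := ℝ) (M := E) (by simp [hE])
  rw [integral_stereographicMeasure, ← integral_radial_comp_log]
  refine (integral_fun_norm_addHaar (volume : Measure E)
    (fun r => 1 / (π * (1 + r ^ 2) ^ 2) * g (log (1 + r ^ 2)))).trans ?_
  rw [volume_real_unitBall_of_finrank_eq_two, hE, nsmul_eq_mul, smul_eq_mul, ← mul_assoc,
    ← integral_const_mul]
  congr with r
  simp only [Nat.cast_ofNat, Nat.add_one_sub_one, pow_one, smul_eq_mul]
  field_simp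

instance isProbabilityMeasure_stereographicMeasure :
    IsProbabilityMeasure (stereographicMeasure E) := by
  have h := integral_comp_log_one_add_norm_sq (E := E) (fun _ => 1)
  simp only [integral_const, smul_eq_mul, mul_one, integral_exp_neg_Ioi_zero] at h
  exact ⟨(ENNReal.toReal_eq_one_iff _).1 h⟩

lemma integrable_log_one_add_norm_sq :
    Integrable (fun x : E => log (1 + ‖x‖ ^ 2)) (stereographicMeasure E) :=
  integrable_comp_log_one_add_norm_sq_iff (g := id).2 <| by
    simpa [show (2 : ℝ) - 1 = 1 by norm_num] using GammaIntegral_convergent (s := 2) two_pos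

lemma integral_log_one_add_norm_sq :
    ∫ x : E, log (1 + ‖x‖ ^ 2) ∂stereographicMeasure E = 1 := by
  have hΓ := Gamma_eq_integral (s := 2) two_pos
  simp only [Gamma_two, show (2 : ℝ) - 1 = 1 by norm_num, rpow_one] at hΓ
  exact (integral_comp_log_one_add_norm_sq id).trans hΓ.symm

section LogMomentComp

variable {Ω : Type*} [MeasurableSpace Ω] {ρ : Measure Ω} {φ : Ω → E}

lemma integrable_log_one_add_norm_sq_comp (hφ : MeasurePreserving φ ρ (stereographicMeasure E)) :
    Integrable (fun ω => log (1 + ‖φ ω‖ ^ 2)) ρ :=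
  hφ.integrable_comp_of_integrable integrable_log_one_add_norm_sq

lemma integral_log_one_add_norm_sq_comp (hφ : MeasurePreserving φ ρ (stereographicMeasure E)) :
    ∫ ω, log (1 + ‖φ ω‖ ^ 2) ∂ρ = 1 := by
  have h := integral_map hφ.aemeasurable (f := fun x => log (1 + ‖x‖ ^ 2))
    (by rw [hφ.map_eq]; exact integrable_log_one_add_norm_sq.aestronglyMeasurable)
  rw [← h, hφ.map_eq, integral_log_one_add_norm_sq]

end LogMomentComp

end Plane

section SphereRotation

attribute [local instance] Complex.finrank_real_complex_fact

lemma det_complex_smul_one (c : ℂ) : (c • (1 : ℂ →L[ℝ] ℂ)).det = ‖c‖ ^ 2 := by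
  rw [← Complex.normSq_eq_norm_sq, ← Algebra.norm_complex_apply]
  rfl

lemma lintegral_image_eq_lintegral_norm_deriv_sq_mul {s : Set ℂ} {f f' : ℂ → ℂ}
    (hs : MeasurableSet s) (hf' : ∀ z ∈ s, HasDerivWithinAt f (f' z) s z) (hf : InjOn f s)
    (g : ℂ → ℝ≥0∞) :
    ∫⁻ w in f '' s, g w = ∫⁻ z in s, ENNReal.ofReal (‖f' z‖ ^ 2) * g (f z) := by
  rw [lintegral_image_eq_lintegral_abs_det_fderiv_mul volume hs
    (fun z hz => (hf' z hz).complexToReal_fderiv) hf]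
  simp only [det_complex_smul_one, abs_sq]

/-- The rotation of the Riemann sphere that takes `x` to `∞`, in the stereographic coordinate `y`
(with the junk value `0` at `y = x`). -/
def sphereRotation (x y : ℂ) : ℂ :=
  (1 + conj x * y) / (y - x)

lemma measurable_sphereRotation : Measurable (Function.uncurry sphereRotation) := by
  have hconj : Measurable fun z : ℂ => conj z := Complex.continuous_conj.measurable
  unfold sphereRotation Function.uncurry
  fun_prop

lemma one_add_conj_mul_self (x : ℂ) : 1 + conj x * x = ((1 + ‖x‖ ^ 2 : ℝ) : ℂ) := by
  rw [Complex.conj_mul']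
  push_cast
  rfl

lemma one_add_norm_sq_sphereRotation {x y : ℂ} (h : y ≠ x) :
    1 + ‖sphereRotation x y‖ ^ 2 = (1 + ‖x‖ ^ 2) * (1 + ‖y‖ ^ 2) / ‖y - x‖ ^ 2 := by
  have hyx : ‖y - x‖ ^ 2 ≠ 0 := by simpa [sub_eq_zero] using h
  rw [sphereRotation, norm_div, div_pow, eq_div_iff hyx, add_mul, div_mul_cancel₀ _ hyx]
  simp only [← Complex.normSq_eq_norm_sq, Complex.normSq_apply, Complex.add_re, Complex.add_im,
    Complex.sub_re, Complex.sub_im, Complex.mul_re, Complex.mul_im, Complex.conj_re,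
    Complex.conj_im, Complex.one_re, Complex.one_im]
  ring

lemma hasDerivAt_sphereRotation {x y : ℂ} (h : y ≠ x) :
    HasDerivAt (sphereRotation x) (-(1 + ‖x‖ ^ 2 : ℝ) / (y - x) ^ 2) y := by
  have hnum : HasDerivAt (fun y => 1 + conj x * y) (conj x) y := by
    simpa using ((hasDerivAt_id y).const_mul (conj x)).const_add 1
  refine (hnum.div ((hasDerivAt_id y).sub_const x) (sub_ne_zero.2 h)).congr_deriv ?_
  rw [← one_add_conj_mul_self]
  simp only [id]
  ring

lemma sphereRotation_sub_conj {x y : ℂ} (h : y ≠ x) :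
    sphereRotation x y - conj x = (1 + ‖x‖ ^ 2 : ℝ) / (y - x) := by
  have := sub_ne_zero.2 h
  rw [sphereRotation, ← one_add_conj_mul_self]
  field_simp
  ring

lemma sphereRotation_ne_conj {x y : ℂ} (h : y ≠ x) : sphereRotation x y ≠ conj x := by
  rw [← sub_ne_zero, sphereRotation_sub_conj h]
  exact div_ne_zero (Complex.ofReal_ne_zero.2 (by positivity)) (sub_ne_zero.2 h)

lemma sphereRotation_conj_sphereRotation {x y : ℂ} (h : y ≠ x) :
    sphereRotation (conj x) (sphereRotation x y) = y := by
  have hyx := sub_ne_zero.2 h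
  have hnum : 1 + conj (conj x) * sphereRotation x y = y * (sphereRotation x y - conj x) := by
    rw [Complex.conj_conj, sphereRotation]
    field_simp
    ring
  calc sphereRotation (conj x) (sphereRotation x y)
      = (1 + conj (conj x) * sphereRotation x y) / (sphereRotation x y - conj x) := rfl
    _ = y := by
      rw [hnum, mul_div_cancel_right₀ _ (sub_ne_zero.2 (sphereRotation_ne_conj h))]

lemma bijOn_sphereRotation (x : ℂ) : BijOn (sphereRotation x) {x}ᶜ {conj x}ᶜ := by
  have hmaps (z : ℂ) : MapsTo (sphereRotation z) {z}ᶜ {conj z}ᶜ := fun _ => sphereRotation_ne_conj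
  have hinv (z : ℂ) : LeftInvOn (sphereRotation (conj z)) (sphereRotation z) {z}ᶜ :=
    fun _ => sphereRotation_conj_sphereRotation
  refine InvOn.bijOn (f' := sphereRotation (conj x)) ⟨hinv x, ?_⟩ (hmaps x) ?_
  · simpa only [Complex.conj_conj] using hinv (conj x)
  · simpa only [Complex.conj_conj] using hmaps (conj x)

lemma norm_deriv_sq_mul_stereographicDensity_sphereRotation {x y : ℂ} (h : y ≠ x) :
    ‖-(1 + ‖x‖ ^ 2 : ℝ) / (y - x) ^ 2‖ ^ 2 * stereographicDensity (sphereRotation x y) =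
      stereographicDensity y := by
  have hyx : ‖y - x‖ ≠ 0 := norm_ne_zero_iff.2 (sub_ne_zero.2 h)
  rw [stereographicDensity, stereographicDensity, one_add_norm_sq_sphereRotation h, norm_div,
    norm_neg, norm_pow, Complex.norm_real, norm_of_nonneg (by positivity)]
  field_simp

lemma stereographicMeasure_image_sphereRotation {x : ℂ} {s : Set ℂ} (hs : MeasurableSet s)
    (hx : s ⊆ {x}ᶜ) :
    stereographicMeasure ℂ (sphereRotation x '' s) = stereographicMeasure ℂ s := by
  have hderiv (y : ℂ) (hy : y ∈ s) := (hasDerivAt_sphereRotation (hx hy)).hasDerivWithinAt (s := s)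
  have hinj : InjOn (sphereRotation x) s := (bijOn_sphereRotation x).injOn.mono hx
  rw [stereographicMeasure, withDensity_apply' _ s, withDensity_apply' _ (sphereRotation x '' s),
    lintegral_image_eq_lintegral_norm_deriv_sq_mul hs hderiv hinj]
  refine setLIntegral_congr_fun hs fun y hy => ?_
  simp only [← norm_deriv_sq_mul_stereographicDensity_sphereRotation (hx hy),
    ENNReal.ofReal_mul (sq_nonneg _)]

lemma measurePreserving_sphereRotation (x : ℂ) :
    MeasurePreserving (sphereRotation x) (stereographicMeasure ℂ) (stereographicMeasure ℂ) := by
  have hm : Measurable (sphereRotation x) := measurable_sphereRotation.of_uncurry_left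
  refine ⟨hm, Measure.ext fun s hs => ?_⟩
  have himage : sphereRotation x '' (sphereRotation x ⁻¹' s \ {x}) = s \ {conj x} := by
    rw [sdiff_eq, inter_comm, image_inter_preimage, (bijOn_sphereRotation x).image_eq, inter_comm,
      sdiff_eq]
  rw [Measure.map_apply hm hs]
  calc stereographicMeasure ℂ (sphereRotation x ⁻¹' s)
      = stereographicMeasure ℂ (sphereRotation x ⁻¹' s \ {x}) :=
        (measure_sdiff_null (measure_singleton x)).symm
    _ = stereographicMeasure ℂ (sphereRotation x '' (sphereRotation x ⁻¹' s \ {x})) :=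
        (stereographicMeasure_image_sphereRotation ((hm hs).diff (measurableSet_singleton x))
          fun _ hy => hy.2).symm
    _ = stereographicMeasure ℂ (s \ {conj x}) := by rw [himage]
    _ = stereographicMeasure ℂ s := measure_sdiff_null (measure_singleton (conj x))

lemma measurePreserving_sphereRotation_uncurry :
    MeasurePreserving (fun p : ℂ × ℂ => sphereRotation p.1 p.2)
      ((stereographicMeasure ℂ).prod (stereographicMeasure ℂ)) (stereographicMeasure ℂ) :=
  measurePreserving_snd.comp <| (MeasurePreserving.id _).skew_product measurable_sphereRotation <|
    ae_of_all _ fun x => (measurePreserving_sphereRotation x).map_eq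

end SphereRotation

section LogarithmicEnergy

attribute [local instance] FiniteDimensional.of_fact_finrank_eq_two
  Complex.finrank_real_complex_fact

lemma log_norm_sub_eq_sphereRotation {x y : ℂ} (h : x ≠ y) :
    log ‖x - y‖ = 1 / 2 *
      (log (1 + ‖x‖ ^ 2) + log (1 + ‖y‖ ^ 2) - log (1 + ‖sphereRotation x y‖ ^ 2)) := by
  have hyx : ‖y - x‖ ^ 2 ≠ 0 := pow_ne_zero 2 (norm_ne_zero_iff.2 (sub_ne_zero.2 h.symm))
  rw [one_add_norm_sq_sphereRotation h.symm, log_div (by positivity) hyx,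
    log_mul (by positivity) (by positivity), log_pow, norm_sub_rev]
  push_cast
  ring

lemma ae_prod_fst_ne_snd {α : Type*} [MeasurableSpace α] [MeasurableEq α] (μ ν : Measure α)
    [SFinite ν] [NullSingletonClass ν] : ∀ᵐ p ∂μ.prod ν, p.1 ≠ p.2 :=
  (Measure.ae_prod_iff_ae_ae measurableSet_diagonal.compl).2 <|
    ae_of_all _ fun x => (Measure.ae_ne ν x).mono fun _ => Ne.symm

lemma integral_log_norm_sub_complex :
    ∫ p : ℂ × ℂ, log ‖p.1 - p.2‖ ∂(stereographicMeasure ℂ).prod (stereographicMeasure ℂ)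
      = 1 / 2 := by
  set σ := stereographicMeasure ℂ
  have hfst : MeasurePreserving Prod.fst (σ.prod σ) σ := measurePreserving_fst
  have hsnd : MeasurePreserving Prod.snd (σ.prod σ) σ := measurePreserving_snd
  have hrot := measurePreserving_sphereRotation_uncurry
  have hint_fst := integrable_log_one_add_norm_sq_comp hfst
  have hint_snd := integrable_log_one_add_norm_sq_comp hsnd
  have hint_add : Integrable (fun p : ℂ × ℂ => log (1 + ‖p.1‖ ^ 2) + log (1 + ‖p.2‖ ^ 2))
      (σ.prod σ) := hint_fst.add hint_snd
  calc ∫ p, log ‖p.1 - p.2‖ ∂σ.prod σ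
      = ∫ p, 1 / 2 * (log (1 + ‖p.1‖ ^ 2) + log (1 + ‖p.2‖ ^ 2)
          - log (1 + ‖sphereRotation p.1 p.2‖ ^ 2)) ∂σ.prod σ :=
        integral_congr_ae <| (ae_prod_fst_ne_snd σ σ).mono fun _ => log_norm_sub_eq_sphereRotation
    _ = 1 / 2 * (1 + 1 - 1) := by
        rw [integral_const_mul, integral_sub hint_add
          (integrable_log_one_add_norm_sq_comp hrot), integral_add hint_fst hint_snd,
          integral_log_one_add_norm_sq_comp hfst, integral_log_one_add_norm_sq_comp hsnd,
          integral_log_one_add_norm_sq_comp hrot]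
    _ = 1 / 2 := by norm_num

variable {E : Type*} [NormedAddCommGroup E] [InnerProductSpace ℝ E] [MeasurableSpace E]
  [BorelSpace E] [Fact (finrank ℝ E = 2)]

lemma integral_log_norm_sub :
    ∫ p : E × E, log ‖p.1 - p.2‖ ∂(stereographicMeasure E).prod (stereographicMeasure E)
      = 1 / 2 := by
  have hE : finrank ℝ E = 2 := Fact.out
  let e : ℂ ≃ₗᵢ[ℝ] E := Complex.orthonormalBasisOneI.equiv (stdOrthonormalBasis ℝ E)
    (finCongr hE.symm)
  have he := measurePreserving_stereographicMeasure e
  rw [← integral_log_norm_sub_complex, ← (he.prod he).integral_comp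
    (e.toHomeomorph.prodCongr e.toHomeomorph).measurableEmbedding]
  simp only [Prod.map_fst, Prod.map_snd, ← map_sub, e.norm_map]

end LogarithmicEnergy

section ConformalDensity

instance fact_finrank_E2 : Fact (finrank ℝ E2 = 2) := ⟨finrank_euclideanSpace_fin⟩

lemma mu2_eq_stereographicDensity : mu2 = stereographicDensity := rfl

lemma log_mu2 (x : E2) : log (mu2 x) = -Vpot x := by
  rw [mu2, Vpot, one_div, log_inv, log_mul (by positivity) (by positivity), log_pow]
  push_cast
  ring

lemma integral_mu2_mul_Vpot : ∫ x, mu2 x * Vpot x = 2 + log π := by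
  have hint := integrable_log_one_add_norm_sq (E := E2)
  rw [mu2_eq_stereographicDensity, ← integral_stereographicMeasure]
  simp only [Vpot]
  rw [integral_add (hint.const_mul 2) (integrable_const _), integral_const_mul,
    integral_log_one_add_norm_sq, integral_const, probReal_univ]
  simp

lemma integral_mu2_mul_mu2_mul_log_norm_sub :
    ∫ p : E2 × E2, mu2 p.1 * mu2 p.2 * log ‖p.1 - p.2‖ = 1 / 2 := by
  rw [mu2_eq_stereographicDensity, ← integral_stereographicMeasure_prod, integral_log_norm_sub]

end ConformalDensity

theorem log_HLS_equality_case_general (α M : ℝ) (hM : M ≠ 0) :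
    (∫ x, (M * mu2 x) * log (M * mu2 x / M)) + α * (∫ x, Vpot x * (M * mu2 x))
        + M * (1 - α) * (1 + log π)
      = (2 / M) * (α - 1) *
          ∫ p : E2 × E2, (M * mu2 p.1) * (M * mu2 p.2) * log ‖p.1 - p.2‖ := by
  have hentropy (x : E2) : M * mu2 x * log (M * mu2 x / M) = -M * (mu2 x * Vpot x) := by
    rw [mul_div_cancel_left₀ _ hM, log_mu2]
    ring
  have hpotential (x : E2) : Vpot x * (M * mu2 x) = M * (mu2 x * Vpot x) := by ring
  have henergy (p : E2 × E2) : M * mu2 p.1 * (M * mu2 p.2) * log ‖p.1 - p.2‖ =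
      M ^ 2 * (mu2 p.1 * mu2 p.2 * log ‖p.1 - p.2‖) := by ring
  simp only [hentropy, hpotential, henergy, integral_const_mul, integral_mu2_mul_Vpot,
    integral_mu2_mul_mu2_mul_log_norm_sub]
  field_simp
  ring

/-- The function f⋆ = M μ realizes the equality case in the generalized
logarithmic Hardy–Littlewood–Sobolev inequality. -/
theorem log_HLS_equality_case (α M : ℝ) (hα : 0 ≤ α) (hM : 0 < M) :
    (∫ x, (M * mu2 x) * Real.log (M * mu2 x / M)) + α * (∫ x, Vpot x * (M * mu2 x))
        + M * (1 - α) * (1 + Real.log π)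
      = (2 / M) * (α - 1) *
          ∫ p : E2 × E2, (M * mu2 p.1) * (M * mu2 p.2) * Real.log ‖p.1 - p.2‖ :=
  log_HLS_equality_case_general α M hM.ne'
end
end
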